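/- arXiv:2011.05006 — 2 statements merged into one kernel-verified Lean document; each statement's English description precedes it below -/
import Mathlib

section
/- Let k ≥ 1 and 0 ≤ m ≤ k−1 be integers, let 0 < q < 1 and z ≠ 0 be real numbers, and let ζ_k = exp(2πi/k) ∈ ℂ. Then the following identity holds in ℂ: k·S^{(k)}_{-m}(q)·Σ_{ℓ∈ℤ} q^{kℓ(ℓ+1)/2 − mℓ} z^{kℓ−m} = Σ_{r=0}^{k−1} ζ_k^{−rm} · Π_{i≥1} (Σ_{α=0}^{k} ζ_k^{−αr} q^{αi} z^{α}) · (Σ_{α=0}^{k} ζ_k^{αr} q^{α(i−1)} z^{−α}), where the sum over ℓ and the infinite products converge absolutely. -/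
/-!
Write `geo k y = 1 + y + ⋯ + y ^ k`, and let `Vco k q n` be the coefficients of the entire function
`gfun k q x = ∑ₙ Vco k q n * x ^ n = ∏_{i ≥ 1} geo k (q ^ i * x)`. They are determined by
`gfun k q x = geo k (q * x) * gfun k q (q * x)`, that is, by the recursion `Vco_rec`.

**Combinatorics.** `Vco k q n` is also the sum of `q ^ (∑_{j<n} (j + 1) * ω j)` over the
words `ω 0, …, ω (n - 1)` without `k` consecutive zeros and with `ω (n - 1) ≠ 0` (`Kset_tsum`): such
a nonempty word ends in a block of `a < k` zeros followed by a positive entry, and removing this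
block yields exactly the recursion. For `n = k * N + m` these words are the elements of `Hkm k m`
that agree with the ground state from index `n` on (`Kset_iff`), so that the normalized coefficients
`bco k m q N = Vco k q (k * N + m) / q ^ Gen k m N` are partial sums of the series `Sk k m q`, and
they converge to it once they are known to be bounded (`Sk_tendsto`).

**Analysis.** For `w ≠ 0`, iterating the functional equation and using
`y ^ k * geo k y⁻¹ = geo k y` gives (`gfun_shift`)
`∏_{i=1}^N (q ^ i * w) ^ k * gfun k q (q⁻¹ ^ (N + 1) * w⁻¹)
  = ∏_{i=1}^N geo k (q ^ i * w) * gfun k q (q⁻¹ * w⁻¹)`.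
As `N → ∞` the right side tends to `∏_{i ≥ 1} geo k (q ^ i * w) * geo k (q ^ (i - 1) * w⁻¹)`.
On the left side, the term of index `n = k * M + m` of the power series equals `bco k m q M` times
the theta term of index `ℓ = N - M` (`shift_term`). At `w = 1` and `M = N` this bounds `bco`;
in general, dominated convergence in each residue class `m` gives (`product_eq`)
`∏_{i ≥ 1} geo k (q ^ i * w) * geo k (q ^ (i - 1) * w⁻¹) = ∑_{m<k} Sk k m q * ∑_ℓ thetaTerm k m q w ℓ`.

Taking `w = ζ ^ (-r) * z` multiplies the theta series of class `j` by `ζ ^ (r * j)`, and orthogonality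
of the `k`-th roots of unity isolates the class `m`.
-/

open scoped BigOperators

/-- `Hkm k m` is the set of sequences `(ω_{-i})_{i ≥ 1}` of non-negative integers (indexed here
by `n : ℕ` with `i = n + 1`) having no `k` consecutive zero entries and such that for all
sufficiently large `i`, `ω_{-i} = 1` if `i ≡ m (mod k)` and `ω_{-i} = 0` otherwise. -/
def Hkm (k m : ℕ) : Set (ℕ → ℕ) :=
  {ω | (¬∃ n : ℕ, ∀ j < k, ω (n + j) = 0) ∧
       (∃ N : ℕ, ∀ n ≥ N, ω n = if (n + 1) % k = m then 1 else 0)}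

/-- `W(ω) = Σ_{i ≢ m (mod k)} i·ω_{-i} + Σ_{i ≡ m (mod k)} i·(ω_{-i} − 1)`. -/
noncomputable def Wfun (k m : ℕ) (ω : ℕ → ℕ) : ℤ :=
  ∑ᶠ n : ℕ, (if (n + 1) % k = m then ((n : ℤ) + 1) * ((ω n : ℤ) - 1)
             else ((n : ℤ) + 1) * (ω n : ℤ))

/-- `S^{(k)}_{-m}(q) = Σ_{ω ∈ H_km} q^{W(ω)}`. -/
noncomputable def Sk (k m : ℕ) (q : ℝ) : ℝ := ∑' ω : Hkm k m, q ^ Wfun k m ω.1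

/-- `ζ_k = exp(2πi/k)`. -/
noncomputable def zetaC (k : ℕ) : ℂ := Complex.exp (2 * Real.pi * Complex.I / k)

/-! ### The generating function and its product expansion -/

/-- The Taylor coefficients of `∏_{i ≥ 1} (1 + q ^ i * x + ⋯ + (q ^ i * x) ^ k)`, defined by the
recursion that removes the last block (`a` zeros followed by a positive entry) of a word. -/
noncomputable def Vco (k : ℕ) (q : ℝ) : ℕ → ℝ
  | 0 => 1
  | n + 1 => q ^ (n + 1) / (1 - q ^ (n + 1)) *
      ∑ a ∈ Finset.range k, if a ≤ n then Vco k q (n - a) else 0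
  termination_by n => n
  decreasing_by omega

lemma Vco_succ (k : ℕ) (q : ℝ) (n : ℕ) : Vco k q (n + 1) = q ^ (n + 1) / (1 - q ^ (n + 1)) *
      ∑ a ∈ Finset.range k, if a ≤ n then Vco k q (n - a) else 0 := by
  rw [Vco]

lemma Vco_zero (k : ℕ) (q : ℝ) : Vco k q 0 = 1 := by rw [Vco]

lemma Vco_nonneg (k : ℕ) {q : ℝ} (hq0 : 0 < q) (hq1 : q < 1) (n : ℕ) : 0 ≤ Vco k q n := by
  induction n using Nat.strong_induction_on with
  | _ n ih =>
    cases n with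
    | zero => simp [Vco_zero]
    | succ n =>
      rw [Vco_succ]
      have h1 : q ^ (n + 1) < 1 := pow_lt_one₀ hq0.le hq1 (by omega)
      refine mul_nonneg (div_nonneg (by positivity) (by linarith)) (Finset.sum_nonneg ?_)
      intro a _
      split_ifs
      · exact ih _ (by omega)
      · exact le_rfl

/-- The recursion for `Vco` in the form of the functional equation `gfun_eq`; unlike the defining
recursion it includes the summand `a = 0`. -/
lemma Vco_rec (k : ℕ) {q : ℝ} (hq0 : 0 < q) (hq1 : q < 1) (n : ℕ) :
    Vco k q n = q ^ n * ∑ a ∈ Finset.range (k + 1), if a ≤ n then Vco k q (n - a) else 0 := by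
  cases n with
  | zero =>
    rw [Finset.sum_range_succ']
    simp
  | succ n =>
    have h1 : q ^ (n + 1) < 1 := pow_lt_one₀ hq0.le hq1 (by omega)
    have h2 : 1 - q ^ (n + 1) ≠ 0 := by linarith
    rw [Finset.sum_range_succ']
    simp only [Nat.add_le_add_iff_right, Nat.add_sub_add_right, Nat.zero_le, if_true, Nat.sub_zero]
    have := Vco_succ k q n
    rw [div_mul_eq_mul_div, eq_div_iff h2] at this
    linarith

/-- `Vco k q n` decays faster than any geometric sequence: for large `n` the factor `q ^ n` in the
recursion outweighs the powers of `x`, so `Vco k q n * x ^ n` is at most the maximum of the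
preceding values. -/
lemma Vco_bdd (k : ℕ) {q : ℝ} (hq0 : 0 < q) (hq1 : q < 1) {x : ℝ} (hx : 0 ≤ x) :
    ∃ C, ∀ n, Vco k q n * x ^ n ≤ C := by
  have hlim : Filter.Tendsto (fun n : ℕ => q ^ (n + 1) * ((1 - q)⁻¹ * (k * (1 + x) ^ k)))
      Filter.atTop (nhds (0 * ((1 - q)⁻¹ * (k * (1 + x) ^ k)))) :=
    ((tendsto_pow_atTop_nhds_zero_of_lt_one hq0.le hq1).comp
      (Filter.tendsto_add_atTop_nat 1)).mul_const _
  rw [zero_mul] at hlim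
  obtain ⟨n0, hn0⟩ := Filter.eventually_atTop.1 (hlim.eventually (ge_mem_nhds zero_lt_one))
  have hnn : ∀ n, 0 ≤ Vco k q n * x ^ n := fun n =>
    mul_nonneg (Vco_nonneg k hq0 hq1 n) (by positivity)
  set C := ∑ i ∈ Finset.range (n0 + 1), Vco k q i * x ^ i with hC
  have hC0 : 0 ≤ C := Finset.sum_nonneg fun i _ => hnn i
  refine ⟨C, fun n => ?_⟩
  induction n using Nat.strong_induction_on with
  | _ n ih =>
    by_cases hn : n ≤ n0
    · exact Finset.single_le_sum (f := fun i => Vco k q i * x ^ i) (fun i _ => hnn i)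
        (Finset.mem_range.2 (by omega))
    · obtain ⟨n, rfl⟩ : ∃ n', n = n' + 1 := ⟨n - 1, by omega⟩
      have h1 : q ^ (n + 1) ≤ q := by
        simpa using pow_le_pow_of_le_one hq0.le hq1.le (show 1 ≤ n + 1 by omega)
      have h3 : q ^ (n + 1) / (1 - q ^ (n + 1)) ≤ q ^ (n + 1) * (1 - q)⁻¹ := by
        rw [div_eq_mul_inv]
        gcongr
      have h2 : (∑ a ∈ Finset.range k, if a ≤ n then Vco k q (n - a) else 0) * x ^ (n + 1)
          ≤ k * ((1 + x) ^ k * C) := by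
        rw [Finset.sum_mul]
        calc _ ≤ ∑ a ∈ Finset.range k, (1 + x) ^ k * C := by
              refine Finset.sum_le_sum fun a ha => ?_
              rw [Finset.mem_range] at ha
              split_ifs with h
              · have e : x ^ (n + 1) = x ^ (a + 1) * x ^ (n - a) := by
                  rw [← pow_add]; congr 1; omega
                rw [e]
                have h5 : x ^ (a + 1) ≤ (1 + x) ^ k :=
                  (pow_le_pow_left₀ hx (by linarith) _).trans
                    (pow_le_pow_right₀ (by linarith) (by omega))
                calc _ = x ^ (a + 1) * (Vco k q (n - a) * x ^ (n - a)) := by ring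
                  _ ≤ _ := mul_le_mul h5 (ih _ (by omega)) (hnn _) (by positivity)
              · rw [zero_mul]; positivity
          _ = _ := by simp
      calc Vco k q (n + 1) * x ^ (n + 1)
          = q ^ (n + 1) / (1 - q ^ (n + 1)) *
            ((∑ a ∈ Finset.range k, if a ≤ n then Vco k q (n - a) else 0) * x ^ (n + 1)) := by
              rw [Vco_succ]; ring
        _ ≤ q ^ (n + 1) / (1 - q ^ (n + 1)) * (k * ((1 + x) ^ k * C)) := by
              refine mul_le_mul_of_nonneg_left h2 (div_nonneg (by positivity) (by linarith))
        _ ≤ q ^ (n + 1) * (1 - q)⁻¹ * (k * ((1 + x) ^ k * C)) := by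
              refine mul_le_mul_of_nonneg_right h3 (by positivity)
        _ = (q ^ (n + 1) * ((1 - q)⁻¹ * (k * (1 + x) ^ k))) * C := by ring
        _ ≤ 1 * C := mul_le_mul_of_nonneg_right (hn0 n (by omega)) hC0
        _ = C := one_mul C

lemma Vco_summable_real (k : ℕ) {q : ℝ} (hq0 : 0 < q) (hq1 : q < 1) {x : ℝ} (hx : 0 ≤ x) :
    Summable fun n => Vco k q n * x ^ n := by
  obtain ⟨C, hC⟩ := Vco_bdd k hq0 hq1 (show 0 ≤ 2 * x by linarith)
  refine Summable.of_nonneg_of_le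
    (fun n => mul_nonneg (Vco_nonneg k hq0 hq1 n) (by positivity)) (fun n => ?_)
    ((summable_geometric_of_lt_one (r := 1 / 2) (by norm_num) (by norm_num)).mul_left C)
  have := hC n
  rw [mul_pow] at this
  rw [one_div, inv_pow, ← div_eq_mul_inv, le_div_iff₀ (by positivity)]
  linarith

lemma Vco_summable (k : ℕ) {q : ℝ} (hq0 : 0 < q) (hq1 : q < 1) (x : ℂ) :
    Summable fun n => (Vco k q n : ℂ) * x ^ n := by
  refine Summable.of_norm ?_
  simpa [abs_of_nonneg (Vco_nonneg k hq0 hq1 _)] using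
    Vco_summable_real k hq0 hq1 (norm_nonneg x)

/-- The generating function `∑ₙ Vco k q n * x ^ n`, an entire function of `x`. -/
noncomputable def gfun (k : ℕ) (q : ℝ) (x : ℂ) : ℂ := ∑' n, (Vco k q n : ℂ) * x ^ n

/-- The truncated geometric series `1 + y + ⋯ + y ^ k`. -/
noncomputable def geo (k : ℕ) (y : ℂ) : ℂ := ∑ a ∈ Finset.range (k + 1), y ^ a

lemma gfun_eq (k : ℕ) {q : ℝ} (hq0 : 0 < q) (hq1 : q < 1) (x : ℂ) :
    gfun k q x = geo k (q * x) * gfun k q (q * x) := by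
  have h1 : ∀ a ∈ Finset.range (k + 1),
      HasSum (fun n => if a ≤ n then (q * x) ^ n * (Vco k q (n - a) : ℂ) else 0)
        ((q * x) ^ a * gfun k q (q * x)) := by
    intro a _
    have h := (Vco_summable k hq0 hq1 (q * x)).hasSum.mul_left ((q * x) ^ a)
    refine ((add_left_injective a).hasSum_iff ?_).1 (h.congr_fun fun n => ?_)
    · intro n hn
      refine if_neg fun h' => hn ⟨n - a, ?_⟩
      simp only
      omega
    · simp only [Function.comp, Nat.le_add_left, if_true, Nat.add_sub_cancel, pow_add]
      ring
  have h2 := hasSum_sum h1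
  rw [geo, Finset.sum_mul, ← h2.tsum_eq, gfun]
  refine tsum_congr fun n => ?_
  rw [Vco_rec k hq0 hq1 n]
  push_cast
  rw [mul_assoc, Finset.sum_mul, Finset.mul_sum]
  refine Finset.sum_congr rfl fun a _ => ?_
  split_ifs
  · rw [mul_pow]; ring
  · simp

lemma gfun_iter (k : ℕ) {q : ℝ} (hq0 : 0 < q) (hq1 : q < 1) (x : ℂ) (N : ℕ) :
    gfun k q x = (∏ i ∈ Finset.range N, geo k (q ^ (i + 1) * x)) * gfun k q (q ^ N * x) := by
  induction N with
  | zero => simp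
  | succ N ih =>
    rw [ih, gfun_eq k hq0 hq1 (q ^ N * x), Finset.prod_range_succ]
    simp only [pow_succ]
    ring_nf

lemma gfun_tendsto (k : ℕ) {q : ℝ} (hq0 : 0 < q) (hq1 : q < 1) (x : ℂ) :
    Filter.Tendsto (fun N : ℕ => gfun k q (q ^ N * x)) Filter.atTop (nhds 1) := by
  have h : ∑' n, (if n = 0 then (1 : ℂ) else 0) = 1 := by simp
  rw [← h]
  refine tendsto_tsum_of_dominated_convergence (Vco_summable_real k hq0 hq1 (norm_nonneg x)) ?_ ?_
  · intro n
    rcases Nat.eq_zero_or_pos n with rfl | hn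
    · simp [Vco_zero]
    · have h0 : Filter.Tendsto (fun N : ℕ => (q : ℂ) ^ N * x) Filter.atTop (nhds (0 * x)) :=
        (tendsto_pow_atTop_nhds_zero_of_norm_lt_one
          (by simpa [abs_of_pos hq0] using hq1)).mul_const x
      have := (h0.pow n).const_mul (Vco k q n : ℂ)
      simpa [hn.ne'] using this
  · refine Filter.Eventually.of_forall fun N n => ?_
    simp only [norm_mul, norm_pow, Complex.norm_real, Real.norm_eq_abs,
      abs_of_nonneg (Vco_nonneg k hq0 hq1 n), abs_of_pos hq0]
    refine mul_le_mul_of_nonneg_left (pow_le_pow_left₀ (by positivity) ?_ _)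
      (Vco_nonneg k hq0 hq1 n)
    exact mul_le_of_le_one_left (norm_nonneg x) (pow_le_one₀ hq0.le hq1.le)

lemma geo_multipliable (k : ℕ) {q : ℝ} (hq0 : 0 < q) (hq1 : q < 1) (x : ℂ) :
    Multipliable fun i : ℕ => geo k (q ^ i * x) := by
  have e : ∀ i : ℕ, geo k (q ^ i * x) = 1 + ∑ a ∈ Finset.range k, (q ^ i * x) ^ (a + 1) := by
    intro i
    rw [geo, Finset.sum_range_succ', pow_zero, add_comm]
  simp_rw [e]
  refine multipliable_one_add_of_summable ?_
  refine Summable.of_nonneg_of_le (fun _ => norm_nonneg _)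
    (fun i => (norm_sum_le _ _)) (summable_sum fun a _ => ?_)
  have : ∀ i : ℕ, ‖((q : ℂ) ^ i * x) ^ (a + 1)‖ = (q ^ (a + 1)) ^ i * ‖x‖ ^ (a + 1) := by
    intro i
    simp only [norm_mul, norm_pow, Complex.norm_real, Real.norm_eq_abs, abs_of_pos hq0, mul_pow]
    rw [← pow_mul, ← pow_mul, mul_comm i]
  simp_rw [this]
  exact (summable_geometric_of_lt_one (by positivity)
    (pow_lt_one₀ hq0.le hq1 (by omega))).mul_right _

lemma geo_tprod (k : ℕ) {q : ℝ} (hq0 : 0 < q) (hq1 : q < 1) (x : ℂ) :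
    Multipliable (fun i : ℕ => geo k (q ^ (i + 1) * x)) ∧
    ∏' i : ℕ, geo k (q ^ (i + 1) * x) = gfun k q x := by
  have hm : Multipliable fun i : ℕ => geo k (q ^ (i + 1) * x) := by
    have := geo_multipliable k hq0 hq1 (q * x)
    refine this.congr fun i => ?_
    rw [pow_succ, mul_assoc]
  refine ⟨hm, ?_⟩
  have h1 := hm.hasProd.tendsto_prod_nat.mul (gfun_tendsto k hq0 hq1 x)
  simp_rw [← gfun_iter k hq0 hq1 x] at h1
  rw [mul_one] at h1
  exact tendsto_nhds_unique h1 tendsto_const_nhds |>.symm ▸ rfl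

/-- The functional equation iterated backwards from `q⁻¹ * w⁻¹`, with the factors
`geo k (q ^ i * w)⁻¹` turned into `geo k (q ^ i * w)` by the palindromy of `geo k`. -/
lemma gfun_shift (k : ℕ) {q : ℝ} (hq0 : 0 < q) (hq1 : q < 1) {w : ℂ} (hw : w ≠ 0) (N : ℕ) :
    (∏ i ∈ Finset.range N, (q ^ (i + 1) * w) ^ k) * gfun k q ((q : ℂ)⁻¹ ^ (N + 1) * w⁻¹) =
    (∏ i ∈ Finset.range N, geo k (q ^ (i + 1) * w)) * gfun k q ((q : ℂ)⁻¹ * w⁻¹) := by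
  have hq : (q : ℂ) ≠ 0 := by exact_mod_cast hq0.ne'
  induction N with
  | zero => simp
  | succ N ih =>
    have e1 : (q : ℂ) * ((q : ℂ)⁻¹ ^ (N + 1 + 1) * w⁻¹) = (q : ℂ)⁻¹ ^ (N + 1) * w⁻¹ := by
      rw [pow_succ _ (N + 1)]; field_simp
    have e2 : (q ^ (N + 1) * w) ^ k * geo k ((q : ℂ)⁻¹ ^ (N + 1) * w⁻¹)
        = geo k (q ^ (N + 1) * w) := by
      have : (q : ℂ)⁻¹ ^ (N + 1) * w⁻¹ = (q ^ (N + 1) * w)⁻¹ := by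
        rw [mul_inv, inv_pow]
      rw [this]
      have hy : (q : ℂ) ^ (N + 1) * w ≠ 0 := by positivity
      generalize (q : ℂ) ^ (N + 1) * w = y at hy
      rw [geo, geo, Finset.mul_sum, ← Finset.sum_range_reflect]
      refine Finset.sum_congr rfl fun a ha => ?_
      rw [Finset.mem_range] at ha
      have : k + 1 - 1 - a = k - a := by omega
      rw [this, inv_pow, ← div_eq_mul_inv, div_eq_iff (pow_ne_zero _ hy), ← pow_add]
      congr 1; omega
    rw [gfun_eq k hq0 hq1, e1, Finset.prod_range_succ, Finset.prod_range_succ, ← e2]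
    linear_combination ((q ^ (N + 1) * w) ^ k * geo k ((q : ℂ)⁻¹ ^ (N + 1) * w⁻¹)) * ih

/-! ### Words without `k` consecutive zeros -/

/-- Sequences that agree with `τ` from index `n` on and whose initial word of length `n` has no `k`
consecutive zeros and does not end in zero. Keeping the tail `τ` in the definition makes both
the removal of a last block and the comparison with `Hkm` statements about one and the same `ω`. -/
def Kset (k n : ℕ) (τ : ℕ → ℕ) : Set (ℕ → ℕ) :=
  {ω | (∀ j ≥ n, ω j = τ j) ∧ (∀ s, s + k ≤ n → ∃ j < k, ω (s + j) ≠ 0) ∧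
    (0 < n → ω (n - 1) ≠ 0)}

/-- The tail obtained from `τ` by prepending the entry `c + 1` at index `n`, with zeros before it. -/
def blockTail (τ : ℕ → ℕ) (n c : ℕ) : ℕ → ℕ :=
  fun j => if j < n then 0 else if j = n then c + 1 else τ j

/-- The weight `∑_{j<n} (j + 1) * ω j` of the initial word of length `n`. -/
def wt (n : ℕ) (ω : ℕ → ℕ) : ℕ := ∑ j ∈ Finset.range n, (j + 1) * ω j

lemma Kset_sub {k n a c : ℕ} {τ ω : ℕ → ℕ} (ha : a < k) (han : a ≤ n)
    (h : ω ∈ Kset k (n - a) (blockTail τ n c)) : ω ∈ Kset k (n + 1) τ := by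
  obtain ⟨h1, h2, h3⟩ := h
  have hn : ω n = c + 1 := by rw [h1 n (by omega)]; simp [blockTail]
  refine ⟨fun j hj => ?_, fun s hs => ?_, fun _ => by simp [hn]⟩
  · rw [h1 j (by omega), blockTail, if_neg (by omega), if_neg (by omega)]
  · by_cases h4 : s + k ≤ n - a
    · exact h2 s h4
    by_cases h5 : s + k = n + 1
    · exact ⟨k - 1, by omega, by rw [show s + (k - 1) = n by omega, hn]; omega⟩
    · refine ⟨n - a - 1 - s, by omega, ?_⟩
      rw [show s + (n - a - 1 - s) = n - a - 1 by omega]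
      exact h3 (by omega)

/-- Every word of length `n + 1` ends in a block of `a < k` zeros followed by an entry `c + 1`, where
`a` is maximal. -/
lemma Kset_sup {k n : ℕ} {τ ω : ℕ → ℕ} (h : ω ∈ Kset k (n + 1) τ) :
    ∃ a c, a < k ∧ a ≤ n ∧ ω ∈ Kset k (n - a) (blockTail τ n c) := by
  obtain ⟨h1, h2, h3⟩ := h
  have hne : ∃ a, a = n ∨ ω (n - 1 - a) ≠ 0 := ⟨n, Or.inl rfl⟩
  classical
  have hspec := Nat.find_spec hne
  have hmin : ∀ b < Nat.find hne, b ≠ n ∧ ω (n - 1 - b) = 0 := fun b hb => by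
    simpa using Nat.find_min hne hb
  have hle : Nat.find hne ≤ n := Nat.find_min' hne (Or.inl rfl)
  generalize Nat.find hne = a at *
  have hn : ω n ≠ 0 := h3 (by omega)
  have hzero : ∀ j, n - a ≤ j → j < n → ω j = 0 := fun j hj hj' => by
    have := (hmin (n - 1 - j) (by omega)).2
    rwa [show n - 1 - (n - 1 - j) = j by omega] at this
  refine ⟨a, ω n - 1, ?_, hle, fun j hj => ?_, fun s hs => h2 s (by omega), fun h0 => ?_⟩
  · by_contra hak
    obtain ⟨j, hj, hj'⟩ := h2 (n - k) (by omega)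
    exact hj' (hzero _ (by omega) (by omega))
  · rw [blockTail]
    split_ifs with h5 h6
    · exact hzero j hj h5
    · subst h6; omega
    · exact h1 j (by omega)
  · rcases hspec with h6 | h6
    · omega
    · rwa [show n - a - 1 = n - 1 - a by omega]

lemma Kset_disj {k n a c a' c' : ℕ} {τ ω : ℕ → ℕ} (ha : a ≤ n) (ha' : a' ≤ n)
    (h : ω ∈ Kset k (n - a) (blockTail τ n c)) (h' : ω ∈ Kset k (n - a') (blockTail τ n c')) :
    a = a' ∧ c = c' := by
  have key : ∀ a a' c c', a ≤ n → a' ≤ n → ω ∈ Kset k (n - a) (blockTail τ n c) →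
      ω ∈ Kset k (n - a') (blockTail τ n c') → ¬ a < a' := by
    rintro a a' c c' ha ha' ⟨-, -, h3⟩ ⟨h1, -, -⟩ hlt
    refine h3 (by omega) ?_
    rw [h1 _ (by omega), blockTail, if_pos (by omega)]
  refine ⟨?_, ?_⟩
  · have := key _ _ _ _ ha ha' h h'
    have := key _ _ _ _ ha' ha h' h
    omega
  · have e := h.1 n (by omega)
    have e' := h'.1 n (by omega)
    simp [blockTail] at e e'
    omega

lemma wt_ext {k n a c : ℕ} {τ ω : ℕ → ℕ} (ha : a ≤ n)
    (h : ω ∈ Kset k (n - a) (blockTail τ n c)) :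
    wt (n + 1) ω = (n + 1) * (c + 1) + wt (n - a) ω := by
  rw [wt, wt, Finset.sum_range_succ, h.1 n (by omega),
    ← Finset.sum_subset (Finset.range_subset_range.2 (Nat.sub_le n a))]
  · simp [blockTail]; ring
  · intro j hj hj'
    simp only [Finset.mem_range] at hj hj'
    rw [h.1 j (by omega), blockTail, if_pos hj, mul_zero]

lemma Kset_zero (k : ℕ) (hk : 1 ≤ k) (τ : ℕ → ℕ) : Kset k 0 τ = {τ} := by
  ext ω
  simp only [Kset, Set.mem_ofPred_eq, Set.mem_singleton_iff]
  constructor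
  · rintro ⟨h, -⟩
    funext j; exact h j (by omega)
  · rintro rfl
    exact ⟨fun _ _ => rfl, fun s hs => by omega, fun h => by omega⟩

/-- `Vco k q n` is the weight generating function of words of length `n`. It is stated in `ℝ≥0∞`, where
the sum over the disjoint union of block types needs no prior summability. -/
lemma Kset_tsum (k : ℕ) (hk : 1 ≤ k) {q : ℝ} (hq0 : 0 < q) (hq1 : q < 1) (n : ℕ) :
    ∀ τ, ∑' ω : Kset k n τ, ENNReal.ofReal (q ^ wt n ω.1) = ENNReal.ofReal (Vco k q n) := by
  induction n using Nat.strong_induction_on with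
  | _ n ih =>
  intro τ
  cases n with
  | zero =>
    rw [Kset_zero k hk, tsum_singleton τ (fun ω => ENNReal.ofReal (q ^ wt 0 ω))]
    simp [wt, Vco_zero]
  | succ n =>
    set s := (Finset.range k).filter (· ≤ n) with hs
    have hsmem : ∀ a : s, a.1 < k ∧ a.1 ≤ n := fun a =>
      ⟨Finset.mem_range.1 (Finset.mem_filter.1 a.2).1, (Finset.mem_filter.1 a.2).2⟩
    -- removing the last block identifies `Kset k (n + 1) τ` with a disjoint union over `(a, c)`
    let Φ : (Σ p : s × ℕ, Kset k (n - p.1.1) (blockTail τ n p.2)) → Kset k (n + 1) τ :=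
      fun x => ⟨x.2.1, Kset_sub (hsmem x.1.1).1 (hsmem x.1.1).2 x.2.2⟩
    have hΦ : Function.Bijective Φ := by
      constructor
      · rintro ⟨⟨a, c⟩, ω, hω⟩ ⟨⟨a', c'⟩, ω', hω'⟩ h
        have h : ω = ω' := congrArg Subtype.val h
        subst h
        obtain ⟨h1, h2⟩ := Kset_disj (hsmem a).2 (hsmem a').2 hω hω'
        obtain rfl := Subtype.ext h1
        obtain rfl : c = c' := h2
        rfl
      · rintro ⟨ω, hω⟩
        obtain ⟨a, c, h1, h2, h3⟩ := Kset_sup hω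
        exact ⟨⟨(⟨a, by simp [hs, h1, h2]⟩, c), ω, h3⟩, rfl⟩
    rw [← (Equiv.ofBijective Φ hΦ).tsum_eq, ENNReal.tsum_sigma', ENNReal.tsum_prod']
    have hx : q ^ (n + 1) < 1 := pow_lt_one₀ hq0.le hq1 (by omega)
    have hgeo : ∑' c : ℕ, ENNReal.ofReal ((q ^ (n + 1)) ^ (c + 1)) =
        ENNReal.ofReal (q ^ (n + 1) / (1 - q ^ (n + 1))) := by
      have hh := (hasSum_geometric_of_lt_one (by positivity) hx).mul_left (q ^ (n + 1))
      rw [div_eq_mul_inv, ← hh.tsum_eq, ENNReal.ofReal_tsum_of_nonneg (fun _ => by positivity)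
        hh.summable]
      refine tsum_congr fun c => ?_
      rw [pow_succ']
    have hin : ∀ (a : s) (c : ℕ), ∑' ω : Kset k (n - a.1) (blockTail τ n c),
        ENNReal.ofReal (q ^ wt (n + 1) (Φ ⟨(a, c), ω⟩).1) =
        ENNReal.ofReal ((q ^ (n + 1)) ^ (c + 1)) * ENNReal.ofReal (Vco k q (n - a.1)) := by
      intro a c
      rw [← ih (n - a.1) (by omega) (blockTail τ n c), ← ENNReal.tsum_mul_left]
      refine tsum_congr fun ω => ?_
      rw [← ENNReal.ofReal_mul (by positivity), ← pow_mul, ← pow_add]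
      congr 2
      exact wt_ext (hsmem a).2 ω.2
    simp only [Equiv.ofBijective_apply]
    simp_rw [hin, ENNReal.tsum_mul_right, hgeo]
    rw [ENNReal.tsum_mul_left,
      Finset.tsum_subtype s (fun a => ENNReal.ofReal (Vco k q (n - a))), Vco_succ,
      ENNReal.ofReal_mul (div_nonneg (by positivity) (by linarith)), ← Finset.sum_filter,
      ENNReal.ofReal_sum_of_nonneg fun _ _ => Vco_nonneg k hq0 hq1 _]

lemma Kset_hasSum (k : ℕ) (hk : 1 ≤ k) {q : ℝ} (hq0 : 0 < q) (hq1 : q < 1) (n : ℕ) (τ : ℕ → ℕ) :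
    HasSum (fun ω : Kset k n τ => q ^ wt n ω.1) (Vco k q n) := by
  have h := Kset_tsum k hk hq0 hq1 n τ
  have h1 : Summable (fun ω : Kset k n τ => q ^ wt n ω.1) := by
    have := ENNReal.summable_toReal (h.trans_ne ENNReal.ofReal_ne_top)
    refine this.congr fun ω => ?_
    rw [ENNReal.toReal_ofReal (by positivity)]
  rw [← ENNReal.ofReal_tsum_of_nonneg (fun _ => by positivity) h1,
    ENNReal.ofReal_eq_ofReal_iff (tsum_nonneg fun _ => by positivity) (Vco_nonneg k hq0 hq1 n)] at h
  exact h ▸ h1.hasSum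

/-! ### The series `Sk` as a limit of normalized coefficients -/

/-- The ground state: the sequence to which all elements of `Hkm k m` are eventually equal. -/
def ground (k m : ℕ) : ℕ → ℕ := fun n => if (n + 1) % k = m then 1 else 0

/-- The weight `∑_{M ≤ N} (k * M + m)` of the first `k * N + m` entries of the ground state. -/
def Gen (k m N : ℕ) : ℕ := ∑ M ∈ Finset.range (N + 1), (k * M + m)

lemma wt_ground (k m : ℕ) (hm : m < k) (N : ℕ) : wt (k * N + m) (ground k m) = Gen k m N := by
  induction N with
  | zero =>
    simp only [wt, Gen, Nat.mul_zero, Nat.zero_add, Finset.sum_range_one]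
    rcases Nat.eq_zero_or_pos m with rfl | h0
    · simp
    · rw [Finset.sum_eq_single (m - 1)]
      · have : m - 1 + 1 = m := by omega
        rw [ground, this, Nat.mod_eq_of_lt hm, if_pos rfl, mul_one]
      · intro j hj hne
        rw [Finset.mem_range] at hj
        rw [ground, Nat.mod_eq_of_lt (by omega), if_neg (by omega), mul_zero]
      · simp; omega
  | succ N ih =>
    have e : k * (N + 1) + m = (k * N + m) + k := by ring
    rw [wt] at ih
    rw [Gen, Finset.sum_range_succ, ← Gen, ← ih, e, wt, Finset.sum_range_add]
    congr 1
    rw [Finset.sum_eq_single (k - 1)]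
    · have : k * N + m + (k - 1) + 1 = m + k * (N + 1) := by rw [mul_add]; omega
      rw [ground, this, Nat.add_mul_mod_self_left, Nat.mod_eq_of_lt hm, if_pos rfl]; ring
    · intro j hj hne
      rw [Finset.mem_range] at hj
      rw [ground, if_neg, mul_zero]
      have : k * N + m + j + 1 = (m + j + 1) + k * N := by ring
      rw [this, Nat.add_mul_mod_self_left]
      by_cases h : m + j + 1 < k
      · rw [Nat.mod_eq_of_lt h]; omega
      · rw [Nat.mod_eq_sub_mod (by omega), Nat.mod_eq_of_lt (by omega)]; omega
    · simp; omega

lemma Gen_two (k m N : ℕ) : 2 * (Gen k m N : ℤ) = k * N * (N + 1) + 2 * m * (N + 1) := by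
  induction N with
  | zero => simp [Gen]
  | succ N ih =>
    rw [Gen, Finset.sum_range_succ, ← Gen]
    push_cast
    linear_combination ih

lemma Wfun_Kset {k m N : ℕ} (hm : m < k) {ω : ℕ → ℕ}
    (h : ω ∈ Kset k (k * N + m) (ground k m)) :
    Wfun k m ω = (wt (k * N + m) ω : ℤ) - Gen k m N := by
  rw [← wt_ground k m hm N, Wfun, finsum_eq_sum_of_support_subset (s := Finset.range (k * N + m))]
  · rw [wt, wt]
    push_cast
    rw [← Finset.sum_sub_distrib]
    refine Finset.sum_congr rfl fun j _ => ?_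
    rw [ground]
    split_ifs <;> push_cast <;> ring
  · intro j hj
    by_contra hj'
    apply hj
    simp only [Finset.coe_range, Set.mem_Iio, not_lt] at hj'
    have := h.1 j hj'
    rw [ground] at this
    simp only
    split_ifs at this ⊢ with h1
    · simp [this]
    · simp [this]

lemma Kset_iff {k m N : ℕ} (hm : m < k) {ω : ℕ → ℕ} :
    ω ∈ Kset k (k * N + m) (ground k m) ↔
      ω ∈ Hkm k m ∧ ∀ n ≥ k * N + m, ω n = ground k m n := by
  constructor
  · rintro ⟨h1, h2, h3⟩
    refine ⟨⟨?_, ⟨_, h1⟩⟩, h1⟩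
    rintro ⟨s, hs⟩
    by_cases h4 : s + k ≤ k * N + m
    · obtain ⟨j, hj, hj'⟩ := h2 s h4
      exact hj' (hs j hj)
    by_cases h5 : s < k * N + m
    · refine h3 (by omega) ?_
      have := hs (k * N + m - 1 - s) (by omega)
      rwa [show s + (k * N + m - 1 - s) = k * N + m - 1 by omega] at this
    · set r := (s + 1) % k with hr
      have hrk : r < k := Nat.mod_lt _ (by omega)
      have hdiv := Nat.mod_add_div (s + 1) k
      rw [← hr] at hdiv
      -- any window of length `k` contains an index where the ground state is `1`
      obtain ⟨j, hj, hj'⟩ : ∃ j < k, (r + j) % k = m := by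
        by_cases hrm : r ≤ m
        · exact ⟨m - r, by omega, by rw [Nat.mod_eq_of_lt (by omega)]; omega⟩
        · refine ⟨m + k - r, by omega, ?_⟩
          rw [show r + (m + k - r) = m + k by omega, Nat.add_mod_right, Nat.mod_eq_of_lt hm]
      have h6 := hs j hj
      rw [h1 _ (by omega), ground, if_pos] at h6
      · omega
      · rw [show s + j + 1 = (r + j) + k * ((s + 1) / k) by omega, Nat.add_mul_mod_self_left, hj']
  · rintro ⟨⟨h1, -⟩, h2⟩
    have h1' : ∀ s, ∃ j < k, ω (s + j) ≠ 0 := by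
      intro s
      by_contra! h
      exact h1 ⟨s, h⟩
    refine ⟨h2, fun s _ => h1' s, fun h0 h3 => ?_⟩
    obtain ⟨j, hj, hj'⟩ := h1' (k * N + m - 1)
    apply hj'
    rcases Nat.eq_zero_or_pos j with rfl | hj0
    · exact h3
    · rw [h2 _ (by omega), ground, if_neg]
      rw [show k * N + m - 1 + j + 1 = (m + j) + k * N by omega, Nat.add_mul_mod_self_left]
      by_cases h : m + j < k
      · rw [Nat.mod_eq_of_lt h]; omega
      · rw [Nat.mod_eq_sub_mod (by omega), Nat.mod_eq_of_lt (by omega)]; omega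

/-- The normalized coefficient `Vco k q (k * N + m) / q ^ Gen k m N`, a partial sum of the series
`Sk k m q` (see `bco_hasSum`). -/
noncomputable def bco (k m : ℕ) (q : ℝ) (N : ℕ) : ℝ := Vco k q (k * N + m) / q ^ Gen k m N

lemma bco_nonneg (k m : ℕ) {q : ℝ} (hq0 : 0 < q) (hq1 : q < 1) (N : ℕ) : 0 ≤ bco k m q N :=
  div_nonneg (Vco_nonneg k hq0 hq1 _) (by positivity)

lemma bco_hasSum {k m : ℕ} (hm : m < k) {q : ℝ} (hq0 : 0 < q) (hq1 : q < 1) (N : ℕ) :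
    HasSum ((Kset k (k * N + m) (ground k m)).indicator fun ω => q ^ Wfun k m ω)
      (bco k m q N) := by
  rw [← hasSum_subtype_iff_indicator]
  refine ((Kset_hasSum k (by omega) hq0 hq1 (k * N + m) (ground k m)).div_const _).congr_fun
    fun ω => ?_
  simp only [Function.comp]
  rw [Wfun_Kset hm ω.2, zpow_sub₀ hq0.ne', zpow_natCast, zpow_natCast]

/-- The sets in `bco_hasSum` exhaust `Hkm k m`, so a bound on `bco` yields the summability of the
series `Sk k m q` as well as its value. -/
lemma Sk_tendsto {k m : ℕ} (hm : m < k) {q : ℝ} (hq0 : 0 < q) (hq1 : q < 1) {C : ℝ}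
    (hC : ∀ N, bco k m q N ≤ C) :
    Filter.Tendsto (bco k m q) Filter.atTop (nhds (Sk k m q)) := by
  set f : (ℕ → ℕ) → ℝ := fun ω => q ^ Wfun k m ω with hf
  have hf0 : ∀ ω, 0 ≤ f ω := fun ω => by positivity
  have hev : ∀ ω ∈ Hkm k m, ∀ᶠ N in Filter.atTop, ω ∈ Kset k (k * N + m) (ground k m) := by
    intro ω hω
    obtain ⟨N0, h0⟩ := hω.2
    filter_upwards [Filter.eventually_ge_atTop N0] with N hN
    refine (Kset_iff hm).2 ⟨hω, fun n hn => h0 n ?_⟩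
    have : N ≤ k * N := Nat.le_mul_of_pos_left N (by omega)
    omega
  have hnot : ∀ ω ∉ Hkm k m, ∀ N, ω ∉ Kset k (k * N + m) (ground k m) :=
    fun ω hω N h => hω ((Kset_iff hm).1 h).1
  have htend : ∀ ω, Filter.Tendsto
      (fun N => (Kset k (k * N + m) (ground k m)).indicator f ω) Filter.atTop
      (nhds ((Hkm k m).indicator f ω)) := by
    intro ω
    refine tendsto_const_nhds.congr' ?_
    by_cases hω : ω ∈ Hkm k m
    · filter_upwards [hev ω hω] with N hN
      simp [hω, hN]
    · filter_upwards with N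
      simp [hω, hnot ω hω N]
  have hsum : Summable ((Hkm k m).indicator f) := by
    refine summable_of_sum_le (c := C) (fun ω => Set.indicator_nonneg (fun _ _ => hf0 _) _) ?_
    intro u
    refine le_of_tendsto (tendsto_finsetSum u fun ω _ => htend ω)
      (Filter.Eventually.of_forall fun N => ?_)
    exact (sum_le_hasSum u (fun ω _ => Set.indicator_nonneg (fun _ _ => hf0 _) _)
      (bco_hasSum hm hq0 hq1 N)).trans (hC N)
  rw [Sk, tsum_subtype (Hkm k m) f]
  have := tendsto_tsum_of_dominated_convergence hsum htend
    (Filter.Eventually.of_forall fun N ω => ?_)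
  · exact this.congr fun N => (bco_hasSum hm hq0 hq1 N).tsum_eq
  · rw [Real.norm_of_nonneg (Set.indicator_nonneg (fun _ _ => hf0 _) _)]
    refine Set.indicator_le_indicator_of_subset ?_ (fun _ => hf0 _) ω
    exact fun ω h => ((Kset_iff hm).1 h).1

/-! ### The theta series -/

/-- The general term of the theta series of residue class `m`. -/
noncomputable def thetaTerm (k m : ℕ) (q : ℝ) (w : ℂ) (ℓ : ℤ) : ℂ :=
  (q : ℂ) ^ ((k : ℤ) * (ℓ * (ℓ + 1)) / 2 - (m : ℤ) * ℓ) * w ^ ((k : ℤ) * ℓ - m)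

lemma two_mul_half (k : ℕ) (ℓ : ℤ) :
    2 * ((k : ℤ) * (ℓ * (ℓ + 1)) / 2) = (k : ℤ) * (ℓ * (ℓ + 1)) :=
  Int.mul_ediv_cancel' ((Int.even_mul_succ_self ℓ).two_dvd.mul_left _)

/-- Here `T` is the triangular number `N * (N + 1) / 2`. -/
lemma prod_pow_eq (k : ℕ) (q : ℝ) (w : ℂ) (N : ℕ) : ∃ T : ℕ, 2 * (T : ℤ) = N * (N + 1) ∧
    ∏ i ∈ Finset.range N, ((q : ℂ) ^ (i + 1) * w) ^ k = (q : ℂ) ^ (k * T) * w ^ (k * N) := by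
  induction N with
  | zero => exact ⟨0, by simp⟩
  | succ N ih =>
    obtain ⟨T, h1, h2⟩ := ih
    refine ⟨T + (N + 1), by push_cast; linear_combination h1, ?_⟩
    rw [Finset.prod_range_succ, h2, mul_pow, ← pow_mul]
    ring

/-- The term of index `k * M + m` on the left side of `gfun_shift` is `bco k m q M` times the theta
term of index `N - M`. -/
lemma shift_term (k m : ℕ) {q : ℝ} (hq0 : 0 < q) {w : ℂ} (hw : w ≠ 0) (N M : ℕ) :
    (∏ i ∈ Finset.range N, ((q : ℂ) ^ (i + 1) * w) ^ k) *
      ((Vco k q (k * M + m) : ℂ) * ((q : ℂ)⁻¹ ^ (N + 1) * w⁻¹) ^ (k * M + m)) =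
    (bco k m q M : ℂ) * thetaTerm k m q w ((N : ℤ) - M) := by
  have hq : (q : ℂ) ≠ 0 := by exact_mod_cast hq0.ne'
  obtain ⟨T, hT, hprod⟩ := prod_pow_eq k q w N
  have hG := Gen_two k m M
  have hE := two_mul_half k ((N : ℤ) - M)
  rw [hprod, thetaTerm, bco]
  generalize (k : ℤ) * (((N : ℤ) - M) * ((N : ℤ) - M + 1)) / 2 = E at *
  have e1 : ((q : ℂ)⁻¹ ^ (N + 1) * w⁻¹) ^ (k * M + m) =
      (q : ℂ) ^ (-(((N + 1) * (k * M + m) : ℕ) : ℤ)) * w ^ (-((k * M + m : ℕ) : ℤ)) := by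
    rw [zpow_neg, zpow_neg, zpow_natCast, zpow_natCast, mul_pow, ← pow_mul, inv_pow, inv_pow]
  rw [e1]
  push_cast
  rw [← zpow_natCast, ← zpow_natCast, ← zpow_natCast, div_eq_mul_inv, ← zpow_neg]
  calc _ = (Vco k q (k * M + m) : ℂ) *
        ((q : ℂ) ^ ((k * T : ℕ) : ℤ) * (q : ℂ) ^ (-(((N : ℤ) + 1) * (k * M + m)))) *
        (w ^ ((k * N : ℕ) : ℤ) * w ^ (-((k : ℤ) * M + m))) := by ring
    _ = (Vco k q (k * M + m) : ℂ) *
        ((q : ℂ) ^ (-(Gen k m M : ℤ)) * (q : ℂ) ^ (E - m * ((N : ℤ) - M))) *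
        w ^ ((k : ℤ) * ((N : ℤ) - M) - m) := by
      have hexp : ((k * T : ℕ) : ℤ) + -(((N : ℤ) + 1) * (k * M + m)) =
          -(Gen k m M : ℤ) + (E - m * (N - M)) := by
        push_cast
        have : 2 * ((k : ℤ) * T + -((N + 1) * (k * M + m))) =
            2 * (-(Gen k m M : ℤ) + (E - m * (N - M))) := by
          linear_combination (k : ℤ) * hT + hG - hE
        linarith
      have hexp' : ((k * N : ℕ) : ℤ) + -((k : ℤ) * M + m) = (k : ℤ) * ((N : ℤ) - M) - m := by
        push_cast; ring
      rw [← zpow_add₀ hq, ← zpow_add₀ hq, ← zpow_add₀ hw, hexp, hexp']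
    _ = _ := by ring

lemma Vco_le_gfun (k : ℕ) {q : ℝ} (hq0 : 0 < q) (hq1 : q < 1) {x : ℝ} (hx : 0 ≤ x) (n : ℕ) :
    Vco k q n * x ^ n ≤ ‖gfun k q x‖ := by
  have h : gfun k q x = ((∑' n, Vco k q n * x ^ n : ℝ) : ℂ) := by
    rw [gfun]; push_cast; rfl
  have hnn : ∀ n, 0 ≤ Vco k q n * x ^ n := fun n =>
    mul_nonneg (Vco_nonneg k hq0 hq1 n) (by positivity)
  rw [h, Complex.norm_real]
  exact ((Vco_summable_real k hq0 hq1 hx).le_tsum n fun j _ => hnn j).trans (le_abs_self _)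

/-- By positivity, `bco k m q N` is at most the left side of `gfun_shift` at `w = 1`, and the right side
converges as `N → ∞`. -/
lemma bco_bdd (k m : ℕ) {q : ℝ} (hq0 : 0 < q) (hq1 : q < 1) : ∃ C, ∀ N, bco k m q N ≤ C := by
  have hlim := (((geo_tprod k hq0 hq1 1).1.hasProd.tendsto_prod_nat).mul_const
    (gfun k q ((q : ℂ)⁻¹ * 1⁻¹))).norm
  obtain ⟨C, hC⟩ := hlim.bddAbove_range
  refine ⟨C, fun N => le_trans ?_ (hC ⟨N, rfl⟩)⟩
  have h1 := shift_term k m hq0 one_ne_zero N N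
  have h2 : thetaTerm k m q 1 ((N : ℤ) - N) = 1 := by simp [thetaTerm]
  rw [h2, mul_one] at h1
  simp only
  rw [← gfun_shift k hq0 hq1 one_ne_zero N, norm_mul]
  have h3 := congrArg norm h1
  rw [norm_mul, Complex.norm_real, Real.norm_of_nonneg (bco_nonneg k m hq0 hq1 N)] at h3
  rw [← h3]
  refine mul_le_mul_of_nonneg_left ?_ (norm_nonneg _)
  have := Vco_le_gfun k hq0 hq1 (x := q⁻¹ ^ (N + 1)) (by positivity) (k * N + m)
  simpa [abs_of_nonneg (Vco_nonneg k hq0 hq1 _), abs_of_pos hq0] using this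

lemma thetaTerm_ne (k m : ℕ) {q : ℝ} (hq0 : 0 < q) {w : ℂ} (hw : w ≠ 0) (ℓ : ℤ) :
    thetaTerm k m q w ℓ ≠ 0 := by
  have hq : (q : ℂ) ≠ 0 := by exact_mod_cast hq0.ne'
  exact mul_ne_zero (zpow_ne_zero _ hq) (zpow_ne_zero _ hw)

lemma thetaTerm_succ (k m : ℕ) {q : ℝ} (hq0 : 0 < q) {w : ℂ} (hw : w ≠ 0) (ℓ : ℤ) :
    thetaTerm k m q w (ℓ + 1) =
      thetaTerm k m q w ℓ * ((q : ℂ) ^ ((k : ℤ) * (ℓ + 1) - m) * w ^ k) := by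
  have hq : (q : ℂ) ≠ 0 := by exact_mod_cast hq0.ne'
  rw [thetaTerm, thetaTerm, ← zpow_natCast w k, mul_mul_mul_comm, ← zpow_add₀ hq, ← zpow_add₀ hw]
  have h1 := two_mul_half k ℓ
  have h2 := two_mul_half k (ℓ + 1)
  congr 2
  · have : 2 * ((k : ℤ) * ((ℓ + 1) * (ℓ + 1 + 1)) / 2) =
        2 * ((k : ℤ) * (ℓ * (ℓ + 1)) / 2) + 2 * (k * (ℓ + 1)) := by
      rw [h1, h2]; ring
    linarith
  · ring

lemma thetaTerm_summable {k m : ℕ} (hk : 1 ≤ k) {q : ℝ} (hq0 : 0 < q) (hq1 : q < 1)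
    {w : ℂ} (hw : w ≠ 0) : Summable (thetaTerm k m q w) := by
  have hq : (q : ℂ) ≠ 0 := by exact_mod_cast hq0.ne'
  have hpow : Filter.Tendsto (fun n : ℕ => (q ^ k) ^ n) Filter.atTop (nhds 0) :=
    tendsto_pow_atTop_nhds_zero_of_lt_one (by positivity) (pow_lt_one₀ hq0.le hq1 (by omega))
  refine Summable.of_nat_of_neg ?_ ?_
  · refine summable_of_ratio_test_tendsto_lt_one (l := 0) zero_lt_one
      (Filter.Eventually.of_forall fun n => thetaTerm_ne k m hq0 hw _) ?_
    have := hpow.mul_const (q ^ ((k : ℤ) - m) * ‖w‖ ^ k)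
    rw [zero_mul] at this
    refine this.congr fun n => ?_
    push_cast
    rw [thetaTerm_succ k m hq0 hw, norm_mul, mul_div_cancel_left₀ _
      (norm_ne_zero_iff.2 (thetaTerm_ne k m hq0 hw _)), norm_mul, norm_zpow, norm_pow,
      Complex.norm_real, Real.norm_of_nonneg hq0.le, ← pow_mul, ← zpow_natCast, ← mul_assoc,
      ← zpow_add₀ hq0.ne']
    congr 2
    push_cast; ring
  · refine summable_of_ratio_test_tendsto_lt_one (l := 0) zero_lt_one
      (Filter.Eventually.of_forall fun n => thetaTerm_ne k m hq0 hw _) ?_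
    have := hpow.mul_const (q ^ (m : ℤ) * (‖w‖ ^ k)⁻¹)
    rw [zero_mul] at this
    refine this.congr fun n => ?_
    have h := thetaTerm_succ k m hq0 hw (-((n + 1 : ℕ) : ℤ))
    rw [show -((n + 1 : ℕ) : ℤ) + 1 = -(n : ℤ) by push_cast; ring] at h
    rw [h, norm_mul, div_mul_cancel_left₀ (norm_ne_zero_iff.2 (thetaTerm_ne k m hq0 hw _)),
      norm_mul, norm_zpow, norm_pow,
      Complex.norm_real, Real.norm_of_nonneg hq0.le, mul_inv, ← zpow_neg, ← pow_mul,
      ← zpow_natCast, ← mul_assoc, ← zpow_add₀ hq0.ne']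
    congr 2
    push_cast; ring

/-- Tannery's theorem for one residue class, after the substitution `ℓ = N - M`. -/
lemma class_tendsto {k m : ℕ} (hm : m < k) {q : ℝ} (hq0 : 0 < q) (hq1 : q < 1)
    {w : ℂ} (hw : w ≠ 0) :
    Filter.Tendsto (fun N : ℕ => ∑' M : ℕ, (bco k m q M : ℂ) * thetaTerm k m q w ((N : ℤ) - M))
      Filter.atTop (nhds ((Sk k m q : ℂ) * ∑' ℓ, thetaTerm k m q w ℓ)) := by
  obtain ⟨C, hC⟩ := bco_bdd k m hq0 hq1
  have hb := Sk_tendsto hm hq0 hq1 hC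
  have hC0 : 0 ≤ C := (bco_nonneg k m hq0 hq1 0).trans (hC 0)
  have e : ∀ N : ℕ, ∑' M : ℕ, (bco k m q M : ℂ) * thetaTerm k m q w ((N : ℤ) - M) =
      ∑' ℓ : ℤ, if ℓ ≤ N then (bco k m q (N - ℓ).toNat : ℂ) * thetaTerm k m q w ℓ else 0 := by
    intro N
    have hinj : Function.Injective fun M : ℕ => (N : ℤ) - M := by
      intro a b h; simpa using h
    rw [← hinj.tsum_eq]
    · refine tsum_congr fun M => ?_
      rw [if_pos (by omega)]
      congr 3
      simp
    · intro ℓ hℓ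
      have : ℓ ≤ N := by
        by_contra h
        simp [h] at hℓ
      exact ⟨(N - ℓ).toNat, by simp only; omega⟩
  simp_rw [e]
  rw [← tsum_mul_left]
  refine tendsto_tsum_of_dominated_convergence
    ((thetaTerm_summable (k := k) (m := m) (by omega) hq0 hq1 hw).norm.mul_left C) ?_ ?_
  · intro ℓ
    have h1 : Filter.Tendsto (fun N : ℕ => ((N : ℤ) - ℓ).toNat) Filter.atTop Filter.atTop := by
      refine Filter.tendsto_atTop.2 fun b => ?_
      filter_upwards [Filter.eventually_ge_atTop (b + ℓ.toNat)] with N hN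
      omega
    have h2 := ((Complex.continuous_ofReal.tendsto _).comp (hb.comp h1)).mul_const
      (thetaTerm k m q w ℓ)
    refine h2.congr' ?_
    filter_upwards [Filter.eventually_ge_atTop ℓ.toNat] with N hN
    rw [if_pos (by omega)]
    rfl
  · refine Filter.Eventually.of_forall fun N ℓ => ?_
    split_ifs
    · rw [norm_mul, Complex.norm_real, Real.norm_of_nonneg (bco_nonneg k m hq0 hq1 _)]
      exact mul_le_mul_of_nonneg_right (hC _) (norm_nonneg _)
    · rw [norm_zero]; positivity

/-- The left side of `gfun_shift`, split by the residue of the summation index modulo `k`. -/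
lemma shift_classes {k : ℕ} (hk : 1 ≤ k) {q : ℝ} (hq0 : 0 < q) (hq1 : q < 1)
    {w : ℂ} (hw : w ≠ 0) (N : ℕ) :
    (∏ i ∈ Finset.range N, ((q : ℂ) ^ (i + 1) * w) ^ k) *
      gfun k q ((q : ℂ)⁻¹ ^ (N + 1) * w⁻¹) =
    ∑ j ∈ Finset.range k,
      ∑' M : ℕ, (bco k j q M : ℂ) * thetaTerm k j q w ((N : ℤ) - M) := by
  have : NeZero k := ⟨by omega⟩
  have hs := (Vco_summable k hq0 hq1 ((q : ℂ)⁻¹ ^ (N + 1) * w⁻¹)).mul_left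
    (∏ i ∈ Finset.range N, ((q : ℂ) ^ (i + 1) * w) ^ k)
  rw [gfun, ← tsum_mul_left]
  set F : ℕ → ℂ := fun n => (∏ i ∈ Finset.range N, ((q : ℂ) ^ (i + 1) * w) ^ k) *
    ((Vco k q n : ℂ) * ((q : ℂ)⁻¹ ^ (N + 1) * w⁻¹) ^ n) with hF
  have hs' : Summable fun p : Fin k × ℕ => F (k * p.2 + p.1) := by
    have := (((Equiv.prodComm _ _).trans (Nat.divModEquiv k).symm).summable_iff (f := F)).2 hs
    refine this.congr fun p => ?_
    simp [Nat.divModEquiv, mul_comm]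
  rw [← ((Equiv.prodComm _ _).trans (Nat.divModEquiv k).symm).tsum_eq F]
  calc _ = ∑' p : Fin k × ℕ, F (k * p.2 + p.1) :=
        tsum_congr fun p => by simp [Nat.divModEquiv, mul_comm]
    _ = ∑ j : Fin k, ∑' M : ℕ, F (k * M + j) := by rw [hs'.tsum_prod, tsum_fintype]
    _ = _ := by
      rw [← Fin.sum_univ_eq_sum_range
        (fun j => ∑' M : ℕ, (bco k j q M : ℂ) * thetaTerm k j q w ((N : ℤ) - M))]
      exact Finset.sum_congr rfl fun j _ => tsum_congr fun M => shift_term k j hq0 hw N M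

/-- The `k`-fold analogue of the Jacobi triple product identity. -/
lemma product_eq {k : ℕ} (hk : 1 ≤ k) {q : ℝ} (hq0 : 0 < q) (hq1 : q < 1)
    {w : ℂ} (hw : w ≠ 0) :
    HasProd (fun i : ℕ => geo k (q ^ (i + 1) * w) * geo k (q ^ i * w⁻¹))
      (∑ j ∈ Finset.range k, (Sk k j q : ℂ) * ∑' ℓ, thetaTerm k j q w ℓ) := by
  have hq : (q : ℂ) ≠ 0 := by exact_mod_cast hq0.ne'
  obtain ⟨hA, -⟩ := geo_tprod k hq0 hq1 w
  obtain ⟨hB, hB'⟩ := geo_tprod k hq0 hq1 ((q : ℂ)⁻¹ * w⁻¹)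
  have e : ∀ i : ℕ, (q : ℂ) ^ (i + 1) * ((q : ℂ)⁻¹ * w⁻¹) = q ^ i * w⁻¹ := fun i => by
    rw [pow_succ]; field_simp
  simp_rw [e] at hB hB'
  have h := hA.hasProd.mul hB.hasProd
  rw [hB'] at h
  have h1 := hA.hasProd.tendsto_prod_nat.mul_const (gfun k q ((q : ℂ)⁻¹ * w⁻¹))
  simp_rw [← gfun_shift k hq0 hq1 hw, shift_classes hk hq0 hq1 hw] at h1
  have h2 := tendsto_finsetSum (Finset.range k) fun j hj =>
    class_tendsto (Finset.mem_range.1 hj) hq0 hq1 hw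
  rwa [tendsto_nhds_unique h1 h2] at h

/-! ### Roots of unity -/

lemma zetaC_prim {k : ℕ} (hk : 1 ≤ k) : IsPrimitiveRoot (zetaC k) k :=
  Complex.isPrimitiveRoot_exp k (by omega)

lemma thetaTerm_twist {k : ℕ} (j : ℕ) (q : ℝ) {ζ : ℂ} (hζ : ζ ^ k = 1) (hζ0 : ζ ≠ 0)
    (r : ℕ) (z : ℂ) (ℓ : ℤ) :
    thetaTerm k j q (ζ ^ (-(r : ℤ)) * z) ℓ = ζ ^ ((r : ℤ) * j) * thetaTerm k j q z ℓ := by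
  have h : ζ ^ (-(r : ℤ) * ((k : ℤ) * ℓ - j)) = ζ ^ ((r : ℤ) * j) := by
    rw [show -(r : ℤ) * ((k : ℤ) * ℓ - j) = (k : ℤ) * (-r * ℓ) + r * j by ring, zpow_add₀ hζ0,
      zpow_mul, zpow_natCast, hζ, one_zpow, one_mul]
  rw [thetaTerm, thetaTerm, mul_zpow, ← zpow_mul, h]
  ring

lemma root_filter {k : ℕ} {ζ : ℂ} (hζ : IsPrimitiveRoot ζ k) {j m : ℕ} (hj : j < k)
    (hm : m < k) :
    ∑ r ∈ Finset.range k, ζ ^ (-(r : ℤ) * m) * ζ ^ ((r : ℤ) * j) = if j = m then (k : ℂ) else 0 := by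
  have h0 : ζ ≠ 0 := hζ.ne_zero (by omega)
  have e : ∀ r : ℕ, ζ ^ (-(r : ℤ) * m) * ζ ^ ((r : ℤ) * j) = (ζ ^ ((j : ℤ) - m)) ^ r := fun r => by
    rw [← zpow_add₀ h0, ← zpow_natCast, ← zpow_mul]
    congr 1; ring
  simp_rw [e]
  split_ifs with h
  · simp [h]
  · have hne : ζ ^ ((j : ℤ) - m) ≠ 1 := by
      intro h1
      have := (hζ.zpow_eq_one_iff_dvd _).1 h1
      have := Int.eq_zero_of_abs_lt_dvd this (by rw [abs_lt]; omega)
      omega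
    rw [geom_sum_eq hne, ← zpow_natCast, ← zpow_mul, mul_comm, zpow_mul, zpow_natCast,
      hζ.pow_eq_one]
    simp

theorem statement2 (k m : ℕ) (hk : 1 ≤ k) (hm : m ≤ k - 1) (q z : ℝ)
    (hq0 : 0 < q) (hq1 : q < 1) (hz : z ≠ 0) :
    Summable (fun ℓ : ℤ =>
      (q : ℂ) ^ ((k : ℤ) * (ℓ * (ℓ + 1)) / 2 - (m : ℤ) * ℓ) * (z : ℂ) ^ ((k : ℤ) * ℓ - m)) ∧
    (∀ r < k, Multipliable (fun i : ℕ =>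
      (∑ α ∈ Finset.range (k + 1),
        zetaC k ^ (-(α : ℤ) * r) * (q : ℂ) ^ (α * (i + 1)) * (z : ℂ) ^ α) *
      (∑ α ∈ Finset.range (k + 1),
        zetaC k ^ ((α : ℤ) * r) * (q : ℂ) ^ (α * i) * ((z : ℂ)⁻¹) ^ α))) ∧
    (k : ℂ) * (Sk k m q : ℝ) *
        (∑' ℓ : ℤ, (q : ℂ) ^ ((k : ℤ) * (ℓ * (ℓ + 1)) / 2 - (m : ℤ) * ℓ) *
          (z : ℂ) ^ ((k : ℤ) * ℓ - m)) =
      ∑ r ∈ Finset.range k, zetaC k ^ (-(r : ℤ) * m) *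
        ∏' i : ℕ,
          (∑ α ∈ Finset.range (k + 1),
            zetaC k ^ (-(α : ℤ) * r) * (q : ℂ) ^ (α * (i + 1)) * (z : ℂ) ^ α) *
          (∑ α ∈ Finset.range (k + 1),
            zetaC k ^ ((α : ℤ) * r) * (q : ℂ) ^ (α * i) * ((z : ℂ)⁻¹) ^ α) := by
  have hmk : m < k := by omega
  have hzc : (z : ℂ) ≠ 0 := by exact_mod_cast hz
  have hprim := zetaC_prim hk
  have h0 : zetaC k ≠ 0 := hprim.ne_zero (by omega)
  have hprod : ∀ r : ℕ, HasProd (fun i : ℕ =>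
      (∑ α ∈ Finset.range (k + 1),
        zetaC k ^ (-(α : ℤ) * r) * (q : ℂ) ^ (α * (i + 1)) * (z : ℂ) ^ α) *
      (∑ α ∈ Finset.range (k + 1),
        zetaC k ^ ((α : ℤ) * r) * (q : ℂ) ^ (α * i) * ((z : ℂ)⁻¹) ^ α))
      (∑ j ∈ Finset.range k, (Sk k j q : ℂ) *
        (zetaC k ^ ((r : ℤ) * j) * ∑' ℓ, thetaTerm k j q z ℓ)) := by
    intro r
    have h := product_eq hk hq0 hq1
      (w := zetaC k ^ (-(r : ℤ)) * z) (mul_ne_zero (zpow_ne_zero _ h0) hzc)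
    simp_rw [thetaTerm_twist _ q hprim.pow_eq_one h0, tsum_mul_left] at h
    refine h.congr_fun fun i => ?_
    rw [geo, geo]
    congr 1
    · refine Finset.sum_congr rfl fun α _ => ?_
      rw [mul_pow, mul_pow, ← zpow_natCast (zetaC k ^ (-(r : ℤ))), ← zpow_mul, ← pow_mul,
        show -(r : ℤ) * α = -(α : ℤ) * r by ring, mul_comm (i + 1) α]
      ring
    · refine Finset.sum_congr rfl fun α _ => ?_
      rw [mul_inv, ← zpow_neg, mul_pow, mul_pow, ← zpow_natCast (zetaC k ^ (- -(r : ℤ))),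
        ← zpow_mul, ← pow_mul, show - -(r : ℤ) * α = (α : ℤ) * r by ring, mul_comm i α]
      ring
  refine ⟨thetaTerm_summable hk hq0 hq1 hzc, fun r _ => (hprod r).multipliable, ?_⟩
  simp_rw [fun r => (hprod r).tprod_eq, Finset.mul_sum]
  rw [Finset.sum_comm]
  have hj : ∀ j ∈ Finset.range k, ∑ r ∈ Finset.range k, zetaC k ^ (-(r : ℤ) * m) *
      ((Sk k j q : ℂ) * (zetaC k ^ ((r : ℤ) * j) * ∑' ℓ, thetaTerm k j q z ℓ)) =
      if j = m then (k : ℂ) * (Sk k j q : ℂ) * ∑' ℓ, thetaTerm k j q z ℓ else 0 := by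
    intro j hj
    have h := root_filter hprim (Finset.mem_range.1 hj) hmk
    calc _ = (∑ r ∈ Finset.range k, zetaC k ^ (-(r : ℤ) * m) * zetaC k ^ ((r : ℤ) * j)) *
          ((Sk k j q : ℂ) * ∑' ℓ, thetaTerm k j q z ℓ) := by
            rw [Finset.sum_mul]
            exact Finset.sum_congr rfl fun r _ => by ring
      _ = _ := by
            rw [h]
            split_ifs <;> ring
  rw [Finset.sum_congr rfl hj, Finset.sum_ite_eq', if_pos (Finset.mem_range.2 hmk)]
  rfl
end

section
/- For all real numbers q, z with 0 < q < 1 and z > 0, one has 2·S_even(q⁴, q+q⁻¹)·Σ_{ℓ∈ℤ} q^{(2ℓ+1)²} z^{2ℓ+1} = Π_{i≥1} (1 + q^{2i−1}z)(1 + q^{2i−1}z⁻¹) − Π_{i≥1} (1 − q^{2i−1}z)(1 − q^{2i−1}z⁻¹), where the sum over ℓ and the infinite products converge absolutely. (Note that 0 < q⁴ < 1 and q+q⁻¹ ≥ 1, so S_even(q⁴, q+q⁻¹) is defined.) -/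
/-!
Put `x = q²`. The Jacobi triple product gives
`∏ (1 + q^{2i-1} z)(1 + q^{2i-1} z⁻¹) = (x; x)_∞⁻¹ ∑_{n ∈ ℤ} q^{n²} z^n`; subtracting the same
identity at `-z` leaves twice the sum over odd `n`. The theorem is therefore equivalent to
`S_even(q⁴, q + q⁻¹) = 1 / (x; x)_∞` (`seven_eq`).

For the latter, `q̃ = x²`, `t² = (1 + x)² / x`, and up to normalisation by the ground state the
weight of `ω` is `∏ q̃^{i ω_{-i}} · (t²)^{#{i : ω_{-i} ≠ 0}}`. Let `a_N` be the sum of these weights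
over configurations on sites `1, …, N` without adjacent zeros and with positive last entry. Looking
at the last entry, `(1 - q̃^N) a_N = t² q̃^N (a_{N-1} + a_{N-2})`, and for this special `t` the
recursion is solved by `a_N = (1 + x)^N x^{N(N+1)/2} / (x; x)_N` (`hasSum_adm`). Elements of `He`
agreeing with the ground state beyond site `2M` correspond to the configurations counted by
`a_{2M}`, and their total normalised weight is exactly `1 / (x; x)_{2M}` (`hasSum_heTrunc`);
monotone exhaustion of `He` finishes the computation.

The triple product itself is obtained from its finite form
`∏_{i ≤ M} (1 + q^{2i-1} z)(1 + q^{2i-1} z⁻¹) / (x; x)_{2M}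
  = ∑_n q^{n²} z^n / ((x; x)_{M-n} (x; x)_{M+n})`
(`hasSum_jtTerm`, by induction on `M`) and dominated convergence (`jacobi_triple`).
-/

open scoped BigOperators

/-- `He` is the set of sequences `(ω_{-i})_{i ≥ 1}` of non-negative integers (indexed here by
`n : ℕ` with `i = n + 1`) with no two consecutive vanishing entries, agreeing for large `i`
with the sequence which is `1` at even `i` and `0` at odd `i`. -/
def He : Set (ℕ → ℕ) :=
  {ω | (∀ n : ℕ, ¬(ω n = 0 ∧ ω (n + 1) = 0)) ∧
       (∃ N : ℕ, ∀ n ≥ N, ω n = if (n + 1) % 2 = 0 then 1 else 0)}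

/-- `Ho` is as `He`, but agreeing for large `i` with the sequence which is `1` at odd `i`
and `0` at even `i`. -/
def Ho : Set (ℕ → ℕ) :=
  {ω | (∀ n : ℕ, ¬(ω n = 0 ∧ ω (n + 1) = 0)) ∧
       (∃ N : ℕ, ∀ n ≥ N, ω n = if (n + 1) % 2 = 1 then 1 else 0)}

/-- `A(ω) = Σ_{i odd} i·ω_{-i} + Σ_{i even} i·(ω_{-i} − 1)`. -/
noncomputable def Afun (ω : ℕ → ℕ) : ℤ :=
  ∑ᶠ n : ℕ, (if (n + 1) % 2 = 1 then ((n : ℤ) + 1) * (ω n : ℤ)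
             else ((n : ℤ) + 1) * ((ω n : ℤ) - 1))

/-- `B(ω) = 2·(Σ_{i odd} 1{ω_{-i} ≥ 1} − Σ_{i even} 1{ω_{-i} = 0})`. -/
noncomputable def Bfun (ω : ℕ → ℕ) : ℤ :=
  2 * ((∑ᶠ n : ℕ, if (n + 1) % 2 = 1 ∧ 1 ≤ ω n then (1 : ℤ) else 0)
     - (∑ᶠ n : ℕ, if (n + 1) % 2 = 0 ∧ ω n = 0 then (1 : ℤ) else 0))

/-- `A'(ω) = Σ_{i even} i·ω_{-i} + Σ_{i odd} i·(ω_{-i} − 1)`. -/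
noncomputable def A'fun (ω : ℕ → ℕ) : ℤ :=
  ∑ᶠ n : ℕ, (if (n + 1) % 2 = 0 then ((n : ℤ) + 1) * (ω n : ℤ)
             else ((n : ℤ) + 1) * ((ω n : ℤ) - 1))

/-- `B'(ω) = 2·(Σ_{i even} 1{ω_{-i} ≥ 1} − Σ_{i odd} 1{ω_{-i} = 0})`. -/
noncomputable def B'fun (ω : ℕ → ℕ) : ℤ :=
  2 * ((∑ᶠ n : ℕ, if (n + 1) % 2 = 0 ∧ 1 ≤ ω n then (1 : ℤ) else 0)
     - (∑ᶠ n : ℕ, if (n + 1) % 2 = 1 ∧ ω n = 0 then (1 : ℤ) else 0))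

/-- `S_even(q̃, t) = Σ_{ω ∈ H_e} q̃^{A(ω)} t^{B(ω)}`. -/
noncomputable def Seven (q t : ℝ) : ℝ := ∑' ω : He, q ^ Afun ω.1 * t ^ Bfun ω.1

/-- `S_odd(q̃, t) = Σ_{ω ∈ H_o} q̃^{A'(ω)} t^{B'(ω)}`. -/
noncomputable def Sodd (q t : ℝ) : ℝ := ∑' ω : Ho, q ^ A'fun ω.1 * t ^ B'fun ω.1

/-! ### Finite configurations and the transfer recursion -/

/-- The finite `q`-Pochhammer symbol `(x; x)_n = ∏_{i=1}^n (1 - x^i)`. -/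
noncomputable def qPoch (x : ℝ) (n : ℕ) : ℝ := ∏ i ∈ Finset.range n, (1 - x ^ (i + 1))

/-- The weight of the entry `k` at site `i = n + 1`, for `q̃ = x²` and `t² = (1+x)²/x`:
it is `q̃^{ik}`, times `t²` when `k ≠ 0`. -/
noncomputable def siteWt (x : ℝ) (n k : ℕ) : ℝ :=
  x ^ (2 * (n + 1) * k) * (if k = 0 then 1 else (1 + x) ^ 2 / x)

/-- The weight of the first `N` entries of `ω`. -/
noncomputable def cfgWt (x : ℝ) (N : ℕ) (ω : ℕ → ℕ) : ℝ := ∏ n ∈ Finset.range N, siteWt x n (ω n)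

/-- Configurations on the first `N` sites (extended by zero) without adjacent zeros. -/
def Adm (N : ℕ) : Set (ℕ → ℕ) :=
  {ω | (∀ n, n + 1 < N → ¬(ω n = 0 ∧ ω (n + 1) = 0)) ∧ ∀ n, N ≤ n → ω n = 0}

/-- The elements of `Adm N` whose last entry is positive; for `N = 0` there is no condition. -/
def AdmPos (N : ℕ) : Set (ℕ → ℕ) :=
  {ω | ω ∈ Adm N ∧ ∀ n, n + 1 = N → ω n ≠ 0}

lemma adm_zero : Adm 0 = {0} := by
  ext ω
  simp [Adm, funext_iff]

lemma admPos_zero : AdmPos 0 = {0} := by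
  ext ω
  simp [AdmPos, adm_zero]

lemma adm_succ (N : ℕ) : Adm (N + 1) = AdmPos (N + 1) ∪ AdmPos N := by
  ext ω
  simp only [Set.mem_union, AdmPos, Adm, Set.mem_ofPred_eq]
  constructor
  · rintro ⟨h1, h2⟩
    by_cases h : ω N = 0
    · refine Or.inr ⟨⟨fun n hn => h1 n (by omega), fun n hn => ?_⟩, ?_⟩
      · rcases Nat.eq_or_lt_of_le hn with rfl | hn
        · exact h
        · exact h2 n hn
      · rintro n rfl h0
        exact h1 n (by omega) ⟨h0, h⟩
    · refine Or.inl ⟨⟨h1, h2⟩, ?_⟩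
      intro n hn
      obtain rfl : n = N := by omega
      exact h
  · rintro (⟨h, -⟩ | ⟨⟨h1, h2⟩, h3⟩)
    · exact h
    · refine ⟨fun n hn h0 => ?_, fun n hn => h2 n (by omega)⟩
      by_cases hN : n + 1 = N
      · exact h3 n hN h0.1
      · exact h1 n (by omega) h0

lemma admPos_disjoint (N : ℕ) : Disjoint (AdmPos (N + 1)) (AdmPos N) := by
  rw [Set.disjoint_left]
  rintro ω ⟨-, h1⟩ ⟨⟨-, h2⟩, -⟩
  exact h1 N rfl (h2 N le_rfl)

/-- Appending a positive entry at the new site `N + 1`. -/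
def appendEquiv (N : ℕ) : Adm N × ℕ ≃ AdmPos (N + 1) where
  toFun p := ⟨Function.update p.1.1 N (p.2 + 1), by
    obtain ⟨⟨ω, h1, h2⟩, k⟩ := p
    refine ⟨⟨fun n hn => ?_, fun n hn => ?_⟩, fun n hn => ?_⟩
    · by_cases h : n + 1 = N
      · simp [h]
      · have a : n ≠ N := by omega
        simpa [Function.update_apply, h, a] using h1 n (by omega)
    · have a : n ≠ N := by omega
      simpa [Function.update_apply, a] using h2 n (by omega)
    · obtain rfl : n = N := by omega
      simp⟩
  invFun ω := (⟨Function.update ω.1 N 0, by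
    obtain ⟨ω, ⟨h1, h2⟩, h3⟩ := ω
    refine ⟨fun n hn => ?_, fun n hn => ?_⟩
    · have a : n ≠ N := by omega
      have b : n + 1 ≠ N := by omega
      simpa [Function.update_apply, a, b] using h1 n (by omega)
    · by_cases h : n = N
      · simp [h]
      · simpa [Function.update_apply, h] using h2 n (by omega)⟩, ω.1 N - 1)
  left_inv := by
    rintro ⟨⟨ω, h1, h2⟩, k⟩
    have := h2 N le_rfl
    ext n
    · by_cases h : n = N
      · subst h; simp [this]
      · simp [h]
    · simp
  right_inv := by
    rintro ⟨ω, ⟨h1, h2⟩, h3⟩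
    have := h3 N rfl
    ext n
    by_cases h : n = N
    · subst h; simp; omega
    · simp [h]

lemma cfgWt_append (x : ℝ) (N : ℕ) (p : Adm N × ℕ) :
    cfgWt x (N + 1) (appendEquiv N p).1 = cfgWt x N p.1.1 * siteWt x N (p.2 + 1) := by
  obtain ⟨⟨ω, h1, h2⟩, k⟩ := p
  simp only [cfgWt, appendEquiv, Equiv.coe_fn_mk, Finset.prod_range_succ, Function.update_self]
  congr 1
  refine Finset.prod_congr rfl fun n hn => ?_
  have : n ≠ N := by simp at hn; omega
  simp [this]

lemma siteWt_nonneg {x : ℝ} (hx : 0 < x) (n k : ℕ) : 0 ≤ siteWt x n k := by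
  unfold siteWt; split_ifs <;> positivity

lemma cfgWt_nonneg {x : ℝ} (hx : 0 < x) (N : ℕ) (ω : ℕ → ℕ) : 0 ≤ cfgWt x N ω :=
  Finset.prod_nonneg fun _ _ => siteWt_nonneg hx _ _

lemma hasSum_siteWt {x : ℝ} (hx : 0 < x) (hx1 : x < 1) (N : ℕ) :
    HasSum (fun k => siteWt x N (k + 1))
      (x ^ (2 * (N + 1)) * ((1 + x) ^ 2 / x) * (1 - x ^ (2 * (N + 1)))⁻¹) := by
  have h := (hasSum_geometric_of_lt_one (r := x ^ (2 * (N + 1))) (by positivity)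
    (pow_lt_one₀ hx.le hx1 (by omega))).mul_left (x ^ (2 * (N + 1)) * ((1 + x) ^ 2 / x))
  refine h.congr_fun fun k => ?_
  simp only [siteWt, Nat.add_eq_zero_iff, one_ne_zero, and_false, if_false]
  rw [mul_add, pow_add, pow_mul x (2 * (N + 1)) k]
  ring

/-- The partition function `(1+x)^N x^{N(N+1)/2} / (x; x)_N` of `AdmPos N`. -/
noncomputable def posSum (x : ℝ) (N : ℕ) : ℝ :=
  ∏ i ∈ Finset.range N, ((1 + x) * x ^ (i + 1) / (1 - x ^ (i + 1)))

lemma one_sub_pow_pos {x : ℝ} (hx : 0 < x) (hx1 : x < 1) (n : ℕ) : 0 < 1 - x ^ (n + 1) :=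
  sub_pos.2 (pow_lt_one₀ hx.le hx1 (by omega))

lemma posSum_succ (x : ℝ) (N : ℕ) :
    posSum x (N + 1) = posSum x N * ((1 + x) * x ^ (N + 1) / (1 - x ^ (N + 1))) :=
  Finset.prod_range_succ _ _

/-- At `t² = (1+x)²/x` the transfer recursion `(1 - q̃^N) a_N = t² q̃^N (a_{N-1} + a_{N-2})`
has a closed-form solution. -/
lemma hasSum_adm {x : ℝ} (hx : 0 < x) (hx1 : x < 1) (N : ℕ) :
    HasSum (fun ω : AdmPos N => cfgWt x N ω.1) (posSum x N) ∧
    HasSum (fun ω : Adm N => cfgWt x N ω.1)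
      (posSum x N * (1 + x ^ (N + 1)) / ((1 + x) * x ^ N)) := by
  induction N with
  | zero =>
    rw [admPos_zero, adm_zero]
    have h1 : (1 + x) ≠ 0 := by positivity
    constructor
    · simp [cfgWt, posSum]
    · simp [cfgWt, posSum, h1]
  | succ N ih =>
    obtain ⟨ih1, ih2⟩ := ih
    have hpos := one_sub_pow_pos hx hx1 N
    have hpos2 := one_sub_pow_pos hx hx1 (2 * N + 1)
    have h1 : (1 + x) ≠ 0 := by positivity
    have key : HasSum (fun ω : AdmPos (N + 1) => cfgWt x (N + 1) ω.1) (posSum x (N + 1)) := by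
      rw [← (appendEquiv N).hasSum_iff]
      have hs := hasSum_siteWt hx hx1 N
      have := ih2.mul hs (ih2.summable.mul_of_nonneg hs.summable
        (fun _ => cfgWt_nonneg hx _ _) (fun _ => siteWt_nonneg hx _ _))
      refine HasSum.congr_fun (f := fun p : Adm N × ℕ => cfgWt x N p.1.1 * siteWt x N (p.2 + 1))
        ?_ (cfgWt_append x N)
      have e : posSum x (N + 1) = posSum x N * (1 + x ^ (N + 1)) / ((1 + x) * x ^ N) *
          (x ^ (2 * (N + 1)) * ((1 + x) ^ 2 / x) * (1 - x ^ (2 * (N + 1)))⁻¹) := by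
        have e : 1 - x ^ (2 * (N + 1)) = (1 - x ^ (N + 1)) * (1 + x ^ (N + 1)) := by ring
        have : 1 + x ^ (N + 1) ≠ 0 := by positivity
        rw [posSum_succ, e]
        field_simp
        ring
      rw [e]
      exact this
    refine ⟨key, ?_⟩
    rw [adm_succ]
    have ihPos : HasSum ((cfgWt x (N + 1)) ∘ ((↑) : AdmPos N → ℕ → ℕ)) (posSum x N) := by
      refine ih1.congr_fun fun ω => ?_
      obtain ⟨ω, ⟨h1, h2⟩, h3⟩ := ω
      simp [cfgWt, Finset.prod_range_succ, h2 N le_rfl, siteWt]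
    have e : posSum x (N + 1) * (1 + x ^ (N + 1 + 1)) / ((1 + x) * x ^ (N + 1)) =
        posSum x (N + 1) + posSum x N := by
      rw [posSum_succ]
      field_simp
      ring
    rw [e]
    exact HasSum.add_disjoint (f := cfgWt x (N + 1)) (admPos_disjoint N) key ihPos

/-! ### Summation over `He` -/

/-- The elements of `He` that agree with the ground state beyond site `2M`. -/
def HeTrunc (M : ℕ) : Set (ℕ → ℕ) :=
  {ω | ω ∈ He ∧ ∀ n ≥ 2 * M, ω n = if (n + 1) % 2 = 0 then 1 else 0}

/-- Replacing the zero tail by the ground-state tail. The ground state vanishes at site `2M + 1`,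
so the entry at site `2M` is forced to be positive. -/
def truncEquiv (M : ℕ) : AdmPos (2 * M) ≃ HeTrunc M where
  toFun ω := ⟨fun n => if n < 2 * M then ω.1 n else if (n + 1) % 2 = 0 then 1 else 0, by
    obtain ⟨ω, ⟨h1, h2⟩, h3⟩ := ω
    refine ⟨⟨fun n => ?_, 2 * M, fun n hn => if_neg (by omega)⟩, fun n hn => if_neg (by omega)⟩
    have h1 := h1 n
    have h3 := h3 n
    grind⟩
  invFun ω := ⟨fun n => if n < 2 * M then ω.1 n else 0, by
    obtain ⟨ω, ⟨h1, h2⟩, h3⟩ := ω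
    refine ⟨⟨fun n hn => ?_, fun n hn => if_neg (by omega)⟩, fun n hn => ?_⟩
    · have h1 := h1 n
      grind
    · have h1 := h1 n
      have h3 := h3 (n + 1)
      grind⟩
  left_inv := by
    rintro ⟨ω, ⟨h1, h2⟩, h3⟩
    ext n
    have := h2 n
    grind
  right_inv := by
    rintro ⟨ω, h1, h3⟩
    ext n
    have := h3 n
    grind

/-- The inverse of the weight of the ground state on the first `N` sites. -/
noncomputable def groundInv (x : ℝ) (N : ℕ) : ℝ :=
  ∏ n ∈ Finset.range N, (if n % 2 = 1 then ((1 + x) ^ 2 / x * x ^ (2 * (n + 1)))⁻¹ else 1)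

lemma posSum_mul_groundInv {x : ℝ} (hx : 0 < x) (hx1 : x < 1) (M : ℕ) :
    posSum x (2 * M) * groundInv x (2 * M) = (qPoch x (2 * M))⁻¹ := by
  induction M with
  | zero => simp [posSum, groundInv, qPoch]
  | succ M ih =>
    have e1 : (2 * M) % 2 ≠ 1 := by omega
    have e2 : (2 * M + 1) % 2 = 1 := by omega
    have h0 : (1 + x) ≠ 0 := by positivity
    have h1 := (one_sub_pow_pos hx hx1 (2 * M)).ne'
    have h2 := (one_sub_pow_pos hx hx1 (2 * M + 1)).ne'
    simp only [posSum, groundInv, qPoch] at ih ⊢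
    rw [show 2 * (M + 1) = 2 * M + 1 + 1 by ring]
    simp only [Finset.prod_range_succ, if_neg e1, if_pos e2, mul_inv]
    rw [← ih]
    field_simp
    ring

lemma zpow_finset_sum {a : ℝ} (ha : a ≠ 0) (s : Finset ℕ) (f : ℕ → ℤ) :
    a ^ (∑ i ∈ s, f i) = ∏ i ∈ s, a ^ f i := by
  classical
  induction s using Finset.induction_on with
  | empty => simp
  | insert i s hi ih => rw [Finset.sum_insert hi, Finset.prod_insert hi, zpow_add₀ ha, ih]

lemma term_eq {q : ℝ} (hq : 0 < q) {M : ℕ} {ω : ℕ → ℕ} (hω : ω ∈ HeTrunc M) :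
    (q ^ 4) ^ Afun ω * (q + q⁻¹) ^ Bfun ω =
      cfgWt (q ^ 2) (2 * M) ω * groundInv (q ^ 2) (2 * M) := by
  obtain ⟨h1, h3⟩ := hω
  have hA : Afun ω = ∑ n ∈ Finset.range (2 * M),
      (if (n + 1) % 2 = 1 then ((n : ℤ) + 1) * (ω n : ℤ)
             else ((n : ℤ) + 1) * ((ω n : ℤ) - 1)) := by
    refine finsum_eq_sum_of_support_subset _ fun n hn => ?_
    by_contra h
    have h3 := h3 n (by simpa using h)
    apply hn
    dsimp only
    split_ifs with h
    · rw [h3, if_neg (by omega)]; simp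
    · rw [h3, if_pos (by omega)]; simp
  have hB1 : (∑ᶠ n : ℕ, if (n + 1) % 2 = 1 ∧ 1 ≤ ω n then (1 : ℤ) else 0) =
      ∑ n ∈ Finset.range (2 * M), if (n + 1) % 2 = 1 ∧ 1 ≤ ω n then (1 : ℤ) else 0 := by
    refine finsum_eq_sum_of_support_subset _ fun n hn => ?_
    by_contra h
    have h3 := h3 n (by simpa using h)
    apply hn
    dsimp only
    rw [if_neg]
    grind
  have hB2 : (∑ᶠ n : ℕ, if (n + 1) % 2 = 0 ∧ ω n = 0 then (1 : ℤ) else 0) =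
      ∑ n ∈ Finset.range (2 * M), if (n + 1) % 2 = 0 ∧ ω n = 0 then (1 : ℤ) else 0 := by
    refine finsum_eq_sum_of_support_subset _ fun n hn => ?_
    by_contra h
    have h3 := h3 n (by simpa using h)
    apply hn
    dsimp only
    rw [if_neg]
    grind
  have hq' := hq.ne'
  have ht : q + q⁻¹ ≠ 0 := by positivity
  -- `t² = (1 + x)² / x` for `x = q²`
  have hs : (q + q⁻¹) ^ (2 : ℤ) = (1 + q ^ 2) ^ 2 / q ^ 2 := by
    rw [zpow_ofNat]
    field_simp
    ring
  have hs0 : (1 + q ^ 2) ^ 2 / q ^ 2 ≠ 0 := by positivity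
  rw [Bfun, hA, hB1, hB2, ← Finset.sum_sub_distrib, zpow_mul, hs,
    zpow_finset_sum (by positivity), zpow_finset_sum hs0, cfgWt, groundInv,
    ← Finset.prod_mul_distrib, ← Finset.prod_mul_distrib]
  simp only [siteWt]
  generalize (1 + q ^ 2) ^ 2 / q ^ 2 = s at hs0
  refine Finset.prod_congr rfl fun n _ => ?_
  have hp (k : ℕ) : (q ^ 4) ^ (((n : ℤ) + 1) * (k : ℤ)) = (q ^ 2) ^ (2 * (n + 1) * k) := by
    rw [← pow_mul, show (((n : ℤ) + 1) * (k : ℤ)) = (((n + 1) * k : ℕ) : ℤ) by push_cast; ring,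
      zpow_natCast, ← pow_mul]
    congr 1; ring
  have hp1 := hp 1
  rw [Nat.cast_one, mul_one, mul_one] at hp1
  have hp2 : (q ^ 4) ^ (((n : ℤ) + 1) * ((ω n : ℤ) - 1)) =
      (q ^ 2) ^ (2 * (n + 1) * ω n) * ((q ^ 2) ^ (2 * (n + 1)))⁻¹ := by
    rw [mul_sub, zpow_sub₀ (by positivity), hp, mul_one, hp1, div_eq_mul_inv]
  rcases Nat.mod_two_eq_zero_or_one n with hn | hn
  · have e1 : (n + 1) % 2 = 1 := by omega
    have hn' : n % 2 ≠ 1 := by omega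
    rw [if_pos e1, if_neg hn', hp]
    by_cases h0 : ω n = 0
    · simp [e1, h0]
    · have : 1 ≤ ω n := by omega
      simp [e1, h0, this]
  · have e1 : (n + 1) % 2 = 0 := by omega
    have e2 : ¬ (n + 1) % 2 = 1 := by omega
    rw [if_neg e2, if_pos hn, hp2]
    by_cases h0 : ω n = 0
    · simp [e1, h0, mul_comm]
    · simp [e1, h0]
      field_simp

lemma hasSum_heTrunc {q : ℝ} (hq0 : 0 < q) (hq1 : q < 1) (M : ℕ) :
    HasSum (fun ω : HeTrunc M => (q ^ 4) ^ Afun ω.1 * (q + q⁻¹) ^ Bfun ω.1)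
      (qPoch (q ^ 2) (2 * M))⁻¹ := by
  have hx : 0 < q ^ 2 := by positivity
  have hx1 : q ^ 2 < 1 := pow_lt_one₀ hq0.le hq1 (by norm_num)
  rw [← posSum_mul_groundInv hx hx1, ← (truncEquiv M).hasSum_iff]
  refine ((hasSum_adm hx hx1 (2 * M)).1.mul_right _).congr_fun fun ω => ?_
  rw [Function.comp_apply, term_eq hq0 (truncEquiv M ω).2]
  congr 1
  refine Finset.prod_congr rfl fun n hn => ?_
  have : n < 2 * M := by simpa using hn
  simp [truncEquiv, this]

lemma qPoch_succ (x : ℝ) (n : ℕ) : qPoch x (n + 1) = qPoch x n * (1 - x ^ (n + 1)) :=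
  Finset.prod_range_succ _ _

lemma qPoch_pos {x : ℝ} (hx : 0 < x) (hx1 : x < 1) (n : ℕ) : 0 < qPoch x n :=
  Finset.prod_pos fun _ _ => one_sub_pow_pos hx hx1 _

lemma qPoch_antitone {x : ℝ} (hx : 0 < x) (hx1 : x < 1) : Antitone (qPoch x) := by
  refine antitone_nat_of_succ_le fun n => ?_
  rw [qPoch_succ]
  have := qPoch_pos hx hx1 n
  have : 0 < x ^ (n + 1) := by positivity
  nlinarith

/-- The infinite product `(x; x)_∞` is positive. -/
lemma exists_qPoch_lim {x : ℝ} (hx : 0 < x) (hx1 : x < 1) :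
    ∃ P : ℝ, 0 < P ∧ (∀ n, P ≤ qPoch x n) ∧
      Filter.Tendsto (qPoch x) Filter.atTop (nhds P) := by
  have hsum : Summable (fun i : ℕ => -x ^ (i + 1)) :=
    ((summable_nat_add_iff 1).2 (summable_geometric_of_lt_one hx.le hx1)).neg
  have hm := (Real.multipliable_one_add_of_summable hsum).hasProd.tendsto_prod_nat
  have hne := tprod_one_add_ne_zero_of_summable (f := fun i : ℕ => -x ^ (i + 1))
    (fun i => by have := one_sub_pow_pos hx hx1 i; rw [← sub_eq_add_neg]; exact this.ne') hsum.norm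
  have ht : Filter.Tendsto (qPoch x) Filter.atTop (nhds (∏' i : ℕ, (1 + -x ^ (i + 1)))) := by
    refine hm.congr fun n => ?_
    simp [qPoch, sub_eq_add_neg]
  have hle := (qPoch_antitone hx hx1).le_of_tendsto ht
  refine ⟨_, lt_of_le_of_ne ?_ hne.symm, hle, ht⟩
  exact ge_of_tendsto' ht fun n => (qPoch_pos hx hx1 n).le

/-- `S_even(q⁴, q + q⁻¹) = 1 / (q²; q²)_∞`, by exhausting `He` by the sets `HeTrunc M`. -/
lemma seven_eq {q : ℝ} (hq0 : 0 < q) (hq1 : q < 1) {P : ℝ} (hP : 0 < P)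
    (hle : ∀ n, P ≤ qPoch (q ^ 2) n)
    (hlim : Filter.Tendsto (qPoch (q ^ 2)) Filter.atTop (nhds P)) :
    Seven (q ^ 4) (q + q⁻¹) = P⁻¹ := by
  set f : (ℕ → ℕ) → ℝ := fun ω => (q ^ 4) ^ Afun ω * (q + q⁻¹) ^ Bfun ω with hf
  have hf0 : ∀ ω, 0 ≤ f ω := fun ω => by positivity
  have hsub : ∀ M, HeTrunc M ⊆ He := fun M ω h => h.1
  have hM : ∀ M, HasSum (Set.indicator (HeTrunc M) f) (qPoch (q ^ 2) (2 * M))⁻¹ := fun M =>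
    hasSum_subtype_iff_indicator.1 (hasSum_heTrunc hq0 hq1 M)
  have hlim2 : Filter.Tendsto (fun M : ℕ => (qPoch (q ^ 2) (2 * M))⁻¹) Filter.atTop
      (nhds P⁻¹) :=
    (hlim.comp (Filter.tendsto_id.const_mul_atTop' (by norm_num : 0 < 2))).inv₀ hP.ne'
  have key : HasSum (Set.indicator He f) P⁻¹ := by
    refine hasSum_of_isLUB_of_nonneg _ (fun ω => Set.indicator_nonneg (fun ω _ => hf0 ω) ω) ?_
    constructor
    · rintro _ ⟨s, rfl⟩
      -- the finitely many elements of `s ∩ He` lie in a common `HeTrunc M`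
      have : ∃ M, ∀ ω ∈ s, ω ∈ He → ω ∈ HeTrunc M := by
        classical
        induction s using Finset.induction_on with
        | empty => exact ⟨0, by simp⟩
        | insert ω s _ ih =>
          obtain ⟨M, hM⟩ := ih
          by_cases hω : ω ∈ He
          · obtain ⟨N, hN⟩ := hω.2
            refine ⟨max M N, fun ω' h' hh => ⟨hh, fun n hn => ?_⟩⟩
            rcases Finset.mem_insert.1 h' with rfl | h'
            · exact hN n (by omega)
            · exact (hM ω' h' hh).2 n (by omega)
          · refine ⟨M, fun ω' h' hh => ?_⟩
            rcases Finset.mem_insert.1 h' with rfl | h'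
            · exact absurd hh hω
            · exact hM ω' h' hh
      obtain ⟨M, h⟩ := this
      have e : ∑ ω ∈ s, Set.indicator He f ω = ∑ ω ∈ s, Set.indicator (HeTrunc M) f ω := by
        refine Finset.sum_congr rfl fun ω hω => ?_
        by_cases hh : ω ∈ He
        · rw [Set.indicator_of_mem hh, Set.indicator_of_mem (h ω hω hh)]
        · rw [Set.indicator_of_notMem hh, Set.indicator_of_notMem fun h => hh h.1]
      dsimp only
      rw [e]
      refine (sum_le_hasSum s (fun ω _ => Set.indicator_nonneg (fun ω _ => hf0 ω) ω)
        (hM M)).trans ?_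
      exact inv_anti₀ hP (hle _)
    · intro c hc
      refine le_of_tendsto' hlim2 fun M => ?_
      refine hasSum_le_of_sum_le (hM M) fun s => ?_
      refine (Finset.sum_le_sum fun ω _ => ?_).trans (hc ⟨s, rfl⟩)
      exact Set.indicator_le_indicator_of_subset (hsub M) hf0 ω
  exact (hasSum_subtype_iff_indicator.2 key).tsum_eq

/-! ### The Jacobi triple product -/

/-- `1 / (x; x)_k`, with the usual convention that it vanishes for `k < 0`. -/
noncomputable def qPochInv (x : ℝ) (k : ℤ) : ℝ := if 0 ≤ k then (qPoch x k.toNat)⁻¹ else 0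

/-- Thanks to the vanishing at negative indices, the recursion holds for all `k : ℤ`. -/
lemma qPochInv_sub_one {x : ℝ} (hx : 0 < x) (hx1 : x < 1) (k : ℤ) :
    qPochInv x (k - 1) = (1 - x ^ k) * qPochInv x k := by
  rcases lt_trichotomy k 0 with hk | rfl | hk
  · rw [qPochInv, qPochInv, if_neg (by omega), if_neg (by omega), mul_zero]
  · simp [qPochInv]
  · obtain ⟨n, rfl⟩ : ∃ n : ℕ, k = (n : ℤ) + 1 := ⟨(k - 1).toNat, by omega⟩
    have h1 := (one_sub_pow_pos hx hx1 n).ne'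
    have h2 := (qPoch_pos hx hx1 n).ne'
    rw [qPochInv, qPochInv, if_pos (by omega), if_pos (by omega),
      show ((n : ℤ) + 1 - 1).toNat = n by omega, show ((n : ℤ) + 1).toNat = n + 1 by omega,
      qPoch_succ, show (n : ℤ) + 1 = ((n + 1 : ℕ) : ℤ) by push_cast; rfl, zpow_natCast]
    field_simp

/-- The `n`-th term of the finite Jacobi triple product of order `M`. -/
noncomputable def jtTerm (q z : ℝ) (M : ℕ) (n : ℤ) : ℝ :=
  q ^ (n ^ 2) * z ^ n * (qPochInv (q ^ 2) (M - n) * qPochInv (q ^ 2) (M + n))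

lemma jtTerm_rec {q z : ℝ} (hq0 : 0 < q) (hq1 : q < 1) (hz : z ≠ 0) (M : ℕ) (n : ℤ) :
    (1 - (q ^ 2) ^ (2 * M + 1)) * (1 - (q ^ 2) ^ (2 * M + 2)) * jtTerm q z (M + 1) n =
      (1 + q ^ (4 * M + 2)) * jtTerm q z M n + q ^ (2 * M + 1) * z * jtTerm q z M (n - 1) +
        q ^ (2 * M + 1) * z⁻¹ * jtTerm q z M (n + 1) := by
  have hx : 0 < q ^ 2 := by positivity
  have hx1 : q ^ 2 < 1 := pow_lt_one₀ hq0.le hq1 (by norm_num)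
  have hq := hq0.ne'
  have hrec := qPochInv_sub_one hx hx1
  simp only [jtTerm]
  push_cast
  have r1 : qPochInv (q ^ 2) (M - n) =
      (1 - (q ^ 2) ^ ((M : ℤ) + 1 - n)) * qPochInv (q ^ 2) (M + 1 - n) := by
    rw [← hrec]; congr 1; ring
  have r2 : qPochInv (q ^ 2) (M + n) =
      (1 - (q ^ 2) ^ ((M : ℤ) + 1 + n)) * qPochInv (q ^ 2) (M + 1 + n) := by
    rw [← hrec]; congr 1; ring
  have r3 : qPochInv (q ^ 2) (M - (n + 1)) =
      (1 - (q ^ 2) ^ ((M : ℤ) - n)) * qPochInv (q ^ 2) (M - n) := by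
    rw [← hrec]; congr 1; ring
  have r4 : qPochInv (q ^ 2) (M + (n - 1)) =
      (1 - (q ^ 2) ^ ((M : ℤ) + n)) * qPochInv (q ^ 2) (M + n) := by
    rw [← hrec]; congr 1; ring
  rw [r3, r4, r1, r2, show (M : ℤ) - (n - 1) = M + 1 - n by ring,
    show (M : ℤ) + (n + 1) = M + 1 + n by ring]
  generalize qPochInv (q ^ 2) (M + 1 - n) = a
  generalize qPochInv (q ^ 2) (M + 1 + n) = b
  have e1 : q ^ ((n - 1) ^ 2) = q ^ (n ^ 2) * ((q ^ 2) ^ n)⁻¹ * q := by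
    rw [← zpow_natCast, ← zpow_mul, ← zpow_neg, ← zpow_add₀ hq, ← zpow_add_one₀ hq]
    congr 1; push_cast; ring
  have e2 : q ^ ((n + 1) ^ 2) = q ^ (n ^ 2) * ((q ^ 2) ^ n) * q := by
    rw [← zpow_natCast, ← zpow_mul, ← zpow_add₀ hq, ← zpow_add_one₀ hq]
    congr 1; push_cast; ring
  rw [e1, e2, zpow_sub_one₀ hz, zpow_add_one₀ hz]
  simp only [zpow_sub₀ hx.ne', zpow_add₀ hx.ne', zpow_natCast, zpow_one]
  have hY : (q ^ 2) ^ n ≠ 0 := (zpow_pos hx n).ne'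
  generalize (q ^ 2) ^ n = Y at hY
  generalize q ^ (n ^ 2) = c
  generalize z ^ n = d
  field_simp
  ring

/-- The finite Jacobi triple product (equivalently, the `q`-binomial theorem). -/
lemma hasSum_jtTerm {q z : ℝ} (hq0 : 0 < q) (hq1 : q < 1) (hz : z ≠ 0) (M : ℕ) :
    HasSum (jtTerm q z M)
      ((∏ i ∈ Finset.range M, (1 + q ^ (2 * i + 1) * z) * (1 + q ^ (2 * i + 1) * z⁻¹)) *
        (qPoch (q ^ 2) (2 * M))⁻¹) := by
  have hx : 0 < q ^ 2 := by positivity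
  have hx1 : q ^ 2 < 1 := pow_lt_one₀ hq0.le hq1 (by norm_num)
  induction M with
  | zero =>
    have h := hasSum_single (f := jtTerm q z 0) 0 (by
      intro n hn
      rcases lt_or_gt_of_ne hn with h | h
      · have : ¬ (0 : ℤ) ≤ ((0 : ℕ) : ℤ) + n := by push_cast; omega
        simp only [jtTerm, qPochInv, if_neg this, mul_zero]
      · have : ¬ (0 : ℤ) ≤ ((0 : ℕ) : ℤ) - n := by push_cast; omega
        simp only [jtTerm, qPochInv, if_neg this, mul_zero, zero_mul])
    simpa [jtTerm, qPochInv, qPoch] using h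
  | succ M ih =>
    have s1 := (Equiv.subRight (1 : ℤ)).hasSum_iff.2 ih
    have s2 := (Equiv.addRight (1 : ℤ)).hasSum_iff.2 ih
    have h := ((ih.mul_left (1 + q ^ (4 * M + 2))).add
      (s1.mul_left (q ^ (2 * M + 1) * z))).add (s2.mul_left (q ^ (2 * M + 1) * z⁻¹))
    have p1 := (one_sub_pow_pos hx hx1 (2 * M)).ne'
    have p2 := (one_sub_pow_pos hx hx1 (2 * M + 1)).ne'
    have h' := (h.congr_fun (jtTerm_rec hq0 hq1 hz M)).mul_left
      ((1 - (q ^ 2) ^ (2 * M + 1)) * (1 - (q ^ 2) ^ (2 * M + 2)))⁻¹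
    simp only [inv_mul_cancel_left₀ (mul_ne_zero p1 p2)] at h'
    rw [Finset.prod_range_succ, show 2 * (M + 1) = 2 * M + 1 + 1 by ring, qPoch_succ, qPoch_succ]
    refine (congrArg (HasSum (jtTerm q z (M + 1))) ?_).mp h'
    generalize ∏ i ∈ Finset.range M, (1 + q ^ (2 * i + 1) * z) * (1 + q ^ (2 * i + 1) * z⁻¹) = F
    have e : (1 + q ^ (4 * M + 2)) + q ^ (2 * M + 1) * z + q ^ (2 * M + 1) * z⁻¹ =
        (1 + q ^ (2 * M + 1) * z) * (1 + q ^ (2 * M + 1) * z⁻¹) := by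
      field_simp
      ring
    rw [← add_mul, ← add_mul, e]
    simp only [mul_inv]
    ring

lemma summable_theta_nat {q w : ℝ} (hq0 : 0 < q) (hq1 : q < 1) (hw : w ≠ 0) :
    Summable (fun n : ℕ => q ^ (n ^ 2) * w ^ n) := by
  refine summable_of_ratio_test_tendsto_lt_one (l := 0) zero_lt_one
    (Filter.Eventually.of_forall fun n => by positivity) ?_
  have h : Filter.Tendsto (fun n : ℕ => (q * |w|) * (q ^ 2) ^ n) Filter.atTop
      (nhds ((q * |w|) * 0)) :=
    (tendsto_pow_atTop_nhds_zero_of_lt_one (by positivity)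
      (pow_lt_one₀ hq0.le hq1 (by norm_num))).const_mul _
  rw [mul_zero] at h
  refine h.congr fun n => ?_
  have : |w| ≠ 0 := abs_ne_zero.2 hw
  simp only [norm_mul, norm_pow, Real.norm_eq_abs, abs_of_pos hq0]
  field_simp
  ring

lemma summable_theta {q z : ℝ} (hq0 : 0 < q) (hq1 : q < 1) (hz : z ≠ 0) :
    Summable (fun n : ℤ => q ^ (n ^ 2) * z ^ n) := by
  refine Summable.of_nat_of_neg ?_ ?_
  · refine (summable_theta_nat hq0 hq1 hz).congr fun n => ?_
    rw [zpow_natCast, ← zpow_natCast]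
    push_cast; rfl
  · refine (summable_theta_nat hq0 hq1 (inv_ne_zero hz)).congr fun n => ?_
    rw [zpow_neg, zpow_natCast, inv_pow, ← zpow_natCast]
    push_cast
    rw [neg_sq]

lemma multipliable_jt {q : ℝ} (z : ℝ) (hq0 : 0 < q) (hq1 : q < 1) :
    Multipliable (fun i : ℕ => (1 + q ^ (2 * i + 1) * z) * (1 + q ^ (2 * i + 1) * z⁻¹)) := by
  have hs : Summable (fun i : ℕ => q ^ (2 * i + 1)) := by
    refine ((summable_geometric_of_lt_one (r := q ^ 2) (by positivity)
      (pow_lt_one₀ hq0.le hq1 (by norm_num))).mul_left q).congr fun i => ?_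
    ring
  exact (Real.multipliable_one_add_of_summable (hs.mul_right z)).mul
    (Real.multipliable_one_add_of_summable (hs.mul_right z⁻¹))

lemma tendsto_qPochInv {x P : ℝ} (hP : 0 < P)
    (hlim : Filter.Tendsto (qPoch x) Filter.atTop (nhds P)) (n : ℤ) :
    Filter.Tendsto (fun M : ℕ => qPochInv x (M + n)) Filter.atTop (nhds P⁻¹) := by
  have ht : Filter.Tendsto (fun M : ℕ => ((M : ℤ) + n).toNat) Filter.atTop Filter.atTop := by
    refine Filter.tendsto_atTop.2 fun b => ?_
    filter_upwards [Filter.eventually_ge_atTop (b + n.natAbs)] with M hM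
    omega
  refine ((hlim.comp ht).inv₀ hP.ne').congr' ?_
  filter_upwards [Filter.eventually_ge_atTop n.natAbs] with M hM
  rw [qPochInv, if_pos (by omega)]
  rfl

lemma qPochInv_bound {x P : ℝ} (hP : 0 < P) (hle : ∀ n, P ≤ qPoch x n) (k : ℤ) :
    ‖qPochInv x k‖ ≤ P⁻¹ := by
  unfold qPochInv
  split_ifs
  · rw [norm_inv, Real.norm_of_nonneg (hP.le.trans (hle _))]
    exact inv_anti₀ hP (hle _)
  · simpa using hP.le

/-- The Jacobi triple product, with `P = (q²; q²)_∞`. -/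
lemma jacobi_triple {q z : ℝ} (hq0 : 0 < q) (hq1 : q < 1) (hz : z ≠ 0) {P : ℝ} (hP : 0 < P)
    (hle : ∀ n, P ≤ qPoch (q ^ 2) n)
    (hlim : Filter.Tendsto (qPoch (q ^ 2)) Filter.atTop (nhds P)) :
    ∏' i : ℕ, (1 + q ^ (2 * i + 1) * z) * (1 + q ^ (2 * i + 1) * z⁻¹) =
      P⁻¹ * ∑' n : ℤ, q ^ (n ^ 2) * z ^ n := by
  have hlim2 : Filter.Tendsto (fun M : ℕ => (qPoch (q ^ 2) (2 * M))⁻¹) Filter.atTop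
      (nhds P⁻¹) :=
    (hlim.comp (Filter.tendsto_id.const_mul_atTop' (by norm_num : 0 < 2))).inv₀ hP.ne'
  have l1 := (multipliable_jt z hq0 hq1).hasProd.tendsto_prod_nat.mul hlim2
  have l2 : Filter.Tendsto (fun M : ℕ => ∑' n, jtTerm q z M n) Filter.atTop
      (nhds (∑' n : ℤ, q ^ (n ^ 2) * z ^ n * (P⁻¹ * P⁻¹))) := by
    refine tendsto_tsum_of_dominated_convergence
      (bound := fun n : ℤ => ‖q ^ (n ^ 2) * z ^ n‖ * (P⁻¹ * P⁻¹))
      ((summable_theta hq0 hq1 hz).norm.mul_right _) (fun n => ?_)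
      (Filter.Eventually.of_forall fun M n => ?_)
    · exact ((tendsto_qPochInv hP hlim (-n)).mul (tendsto_qPochInv hP hlim n)).const_mul _
    · rw [jtTerm, norm_mul, norm_mul (qPochInv _ _)]
      gcongr
      · exact qPochInv_bound hP hle _
      · exact qPochInv_bound hP hle _
  have l3 := l2.congr fun M => (hasSum_jtTerm hq0 hq1 hz M).tsum_eq
  have h := tendsto_nhds_unique l1 l3
  rw [tsum_mul_right, ← mul_assoc] at h
  have := mul_right_cancel₀ (inv_ne_zero hP.ne') h
  rw [this, mul_comm]

theorem statement3 (q z : ℝ) (hq0 : 0 < q) (hq1 : q < 1) (hz : 0 < z) :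
    Summable (fun ℓ : ℤ => q ^ ((2 * ℓ + 1) ^ 2) * z ^ (2 * ℓ + 1)) ∧
    Multipliable (fun i : ℕ => (1 + q ^ (2 * i + 1) * z) * (1 + q ^ (2 * i + 1) * z⁻¹)) ∧
    Multipliable (fun i : ℕ => (1 - q ^ (2 * i + 1) * z) * (1 - q ^ (2 * i + 1) * z⁻¹)) ∧
    2 * Seven (q ^ 4) (q + q⁻¹) * (∑' ℓ : ℤ, q ^ ((2 * ℓ + 1) ^ 2) * z ^ (2 * ℓ + 1)) =
      (∏' i : ℕ, (1 + q ^ (2 * i + 1) * z) * (1 + q ^ (2 * i + 1) * z⁻¹)) -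
      (∏' i : ℕ, (1 - q ^ (2 * i + 1) * z) * (1 - q ^ (2 * i + 1) * z⁻¹)) := by
  have hz0 := hz.ne'
  have hnz : -z ≠ 0 := neg_ne_zero.2 hz0
  have hinj : Function.Injective (fun ℓ : ℤ => 2 * ℓ + 1) := fun a b h => by
    simp only at h; omega
  have hS := summable_theta hq0 hq1 hz0
  have hSneg := summable_theta hq0 hq1 hnz
  have e : ∀ i : ℕ, (1 + q ^ (2 * i + 1) * -z) * (1 + q ^ (2 * i + 1) * (-z)⁻¹) =
      (1 - q ^ (2 * i + 1) * z) * (1 - q ^ (2 * i + 1) * z⁻¹) := fun i => by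
    rw [inv_neg]; ring
  have hm := multipliable_jt (-z) hq0 hq1
  simp only [e] at hm
  refine ⟨hS.comp_injective hinj, multipliable_jt z hq0 hq1, hm, ?_⟩
  obtain ⟨P, hP, hle, hlim⟩ := exists_qPoch_lim (x := q ^ 2) (by positivity)
    (pow_lt_one₀ hq0.le hq1 (by norm_num))
  have j2 := jacobi_triple hq0 hq1 hnz hP hle hlim
  simp only [e] at j2
  rw [seven_eq hq0 hq1 hP hle hlim, jacobi_triple hq0 hq1 hz0 hP hle hlim, j2, ← mul_sub,
    ← hS.tsum_sub hSneg]
  -- only the odd `n` survive in the difference of the two theta series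
  have hodd : ∑' n : ℤ, (q ^ (n ^ 2) * z ^ n - q ^ (n ^ 2) * (-z) ^ n) =
      ∑' ℓ : ℤ, 2 * (q ^ ((2 * ℓ + 1) ^ 2) * z ^ (2 * ℓ + 1)) := by
    rw [← hinj.tsum_eq]
    · refine tsum_congr fun ℓ => ?_
      rw [Odd.neg_zpow ⟨ℓ, rfl⟩]
      ring
    · intro n hn
      rcases Int.even_or_odd n with h | ⟨ℓ, h⟩
      · exact absurd (by simp [h.neg_zpow]) hn
      · exact ⟨ℓ, h.symm⟩
  rw [hodd, tsum_mul_left]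
  ring
end
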